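/- arXiv:2506.17888 — 9 statements merged into one kernel-verified Lean document; each statement's English description precedes it below -/
import Mathlib

section
/- Let X be a path-connected topological space. If there exists a continuous map s : X × X → P(X) with p ∘ s = id_{X×X} (a continuous global motion planner), then X is contractible. -/
/-- For a topological space `X`, the path space `P(X)` is the space of continuous maps
`[0,1] → X` with the compact-open topology, and `pathFibration` sends a path `γ` to its
pair of endpoints `(γ 0, γ 1)`. -/
noncomputable def pathFibration (X : Type*) [TopologicalSpace X] :
    C(unitInterval, X) → X × X :=
  fun γ => (γ 0, γ 1)

/-- If a path-connected space `X` admits a continuous global motion planner, i.e. a continuous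
map `s : X × X → P(X)` with `p ∘ s = id`, then `X` is contractible. -/
theorem contractible_of_continuous_motion_planner
    {X : Type*} [TopologicalSpace X] [PathConnectedSpace X]
    (s : C(X × X, C(unitInterval, X)))
    (hs : ∀ z : X × X, pathFibration X (s z) = z) :
    ContractibleSpace X := by
  obtain ⟨x₀⟩ := PathConnectedSpace.nonempty (X := X)
  refine (contractible_iff_id_nullhomotopic X).2 ⟨x₀, ⟨⟨⟨fun q => s (q.2, x₀) q.1, ?_⟩, ?_, ?_⟩⟩⟩
  · fun_prop
  · intro x
    exact congrArg Prod.fst (hs (x, x₀))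
  · intro x
    exact congrArg Prod.snd (hs (x, x₀))
end

section
/- Let I be a categorical invariant of a category C taking values in ℕ, and let X_•, Y_• : (ℝ, ≤) → C be functors. Then d_E(I(X_•), I(Y_•)) ≤ d_I(X_•, Y_•). -/
open CategoryTheory

open scoped ENNReal

/-- A categorical invariant of a category `C` taking values in `ℕ`: an assignment of natural
numbers to objects and morphisms such that `I (id X) = I X` and
`I (h ∘ g ∘ f) ≤ I g` for all composable morphisms. -/
structure CatInvariant (C : Type*) [Category C] where
  objVal : C → ℕ
  morVal : ∀ {X Y : C}, (X ⟶ Y) → ℕ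
  morVal_id : ∀ X : C, morVal (𝟙 X) = objVal X
  morVal_comp_le : ∀ {X Y Z W : C} (f : X ⟶ Y) (g : Y ⟶ Z) (h : Z ⟶ W),
    morVal (f ≫ g ≫ h) ≤ morVal g

/-- The persistent invariant associated to a functor `X : (ℝ, ≤) ⥤ C` and a categorical
invariant `I`: it assigns to each interval `[a, b]` the value of `I` on the structure
morphism `X a ⟶ X b`. -/
def persistentInvariant {C : Type*} [Category C] (I : CatInvariant C) (X : ℝ ⥤ C) :
    ∀ a b : ℝ, a ≤ b → ℕ :=
  fun _ _ h => I.morVal (X.map (homOfLE h))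

/-- Two interval-indexed invariants are `ε`-eroded if each dominates the other after
thickening intervals by `ε`. -/
def Eroded (F₁ F₂ : ∀ a b : ℝ, a ≤ b → ℕ) (ε : ℝ) : Prop :=
  0 ≤ ε ∧ ∀ (a b : ℝ) (hab : a ≤ b) (hab' : a - ε ≤ b + ε),
    F₂ (a - ε) (b + ε) hab' ≤ F₁ a b hab ∧ F₁ (a - ε) (b + ε) hab' ≤ F₂ a b hab

/-- The erosion distance: the infimum of all `ε ≥ 0` such that the two invariants are
`ε`-eroded (`∞` if none exists). -/
noncomputable def erosionDist (F₁ F₂ : ∀ a b : ℝ, a ≤ b → ℕ) : ℝ≥0∞ :=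
  sInf {e : ℝ≥0∞ | ∃ ε : ℝ, e = ENNReal.ofReal ε ∧ Eroded F₁ F₂ ε}

/-- A `δ`-interleaving between two functors `F G : (ℝ, ≤) ⥤ C`. -/
structure Interleaving {C : Type*} [Category C] (F G : ℝ ⥤ C) (δ : ℝ) where
  nonneg : 0 ≤ δ
  φ : ∀ t : ℝ, F.obj t ⟶ G.obj (t + δ)
  ψ : ∀ t : ℝ, G.obj t ⟶ F.obj (t + δ)
  nat_φ : ∀ (t s : ℝ) (h : t ≤ s),
    F.map (homOfLE h) ≫ φ s = φ t ≫ G.map (homOfLE (by linarith : t + δ ≤ s + δ))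
  nat_ψ : ∀ (t s : ℝ) (h : t ≤ s),
    G.map (homOfLE h) ≫ ψ s = ψ t ≫ F.map (homOfLE (by linarith : t + δ ≤ s + δ))
  tri_F : ∀ t : ℝ, φ t ≫ ψ (t + δ) = F.map (homOfLE (by linarith : t ≤ t + δ + δ))
  tri_G : ∀ t : ℝ, ψ t ≫ φ (t + δ) = G.map (homOfLE (by linarith : t ≤ t + δ + δ))

/-- The interleaving distance between two functors `F G : (ℝ, ≤) ⥤ C`. -/
noncomputable def interleavingDist {C : Type*} [Category C] (F G : ℝ ⥤ C) : ℝ≥0∞ :=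
  sInf {e : ℝ≥0∞ | ∃ δ : ℝ, e = ENNReal.ofReal δ ∧ Nonempty (Interleaving F G δ)}

namespace Interleaving

variable {C : Type*} [Category C] {F G : ℝ ⥤ C} {δ : ℝ}

/-- Exchanging the two functors of an interleaving. -/
def symm (i : Interleaving F G δ) : Interleaving G F δ where
  nonneg := i.nonneg
  φ := i.ψ
  ψ := i.φ
  nat_φ := i.nat_ψ
  nat_ψ := i.nat_φ
  tri_F := i.tri_G
  tri_G := i.tri_F

/-- An interleaving factors a structure morphism of `G` through one of `F`. -/
lemma ψ_comp_map_comp_φ (i : Interleaving F G δ) (c b : ℝ) (h : c + δ ≤ b) (h' : c ≤ b + δ) :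
    i.ψ c ≫ F.map (homOfLE h) ≫ i.φ b = G.map (homOfLE h') := by
  rw [i.nat_φ, ← Category.assoc, i.tri_G, ← G.map_comp]
  rfl

lemma persistentInvariant_le (i : Interleaving F G δ) (I : CatInvariant C) (a b : ℝ)
    (h : a ≤ b) (h' : a - δ ≤ b + δ) :
    persistentInvariant I G (a - δ) (b + δ) h' ≤ persistentInvariant I F a b h := by
  obtain ⟨c, rfl⟩ : ∃ c, a = c + δ := ⟨a - δ, by ring⟩
  simp only [add_sub_cancel_right] at h' ⊢
  unfold persistentInvariant
  rw [← i.ψ_comp_map_comp_φ c b h h']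
  exact I.morVal_comp_le _ _ _

lemma eroded_persistentInvariant (i : Interleaving F G δ) (I : CatInvariant C) :
    Eroded (persistentInvariant I F) (persistentInvariant I G) δ :=
  ⟨i.nonneg, fun a b h h' =>
    ⟨i.persistentInvariant_le I a b h h', i.symm.persistentInvariant_le I a b h h'⟩⟩

end Interleaving

/-- Stability of persistent invariants: the erosion distance between the persistent
invariants is bounded above by the interleaving distance. -/
theorem erosionDist_persistentInvariant_le_interleavingDist
    {C : Type*} [Category C] (I : CatInvariant C) (X Y : ℝ ⥤ C) :
    erosionDist (persistentInvariant I X) (persistentInvariant I Y) ≤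
      interleavingDist X Y := by
  refine sInf_le_sInf ?_
  rintro _ ⟨δ, rfl, ⟨i⟩⟩
  exact ⟨δ, rfl, i.eroded_persistentInvariant I⟩
end

section
/- Let p : E → B be a fibration with B path-connected and E contractible. Then secat(p) = cat(B). -/
open scoped ENNReal unitInterval

universe u v

/-- A continuous map `p : E → B` is a fibration if it has the homotopy lifting property with
respect to every topological space `Z`. -/
def IsFibration {E : Type u} {B : Type v} [TopologicalSpace E] [TopologicalSpace B]
    (p : C(E, B)) : Prop :=
  ∀ (Z : Type (max u v)) (_ : TopologicalSpace Z)
    (H : C(Z × I, B)) (H₀ : C(Z, E)),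
    (∀ z : Z, p (H₀ z) = H (z, 0)) →
      ∃ H' : C(Z × I, E),
        (∀ zt : Z × I, p (H' zt) = H zt) ∧ ∀ z : Z, H' (z, 0) = H₀ z

/-- The sectional category of a continuous map `p : E → B`: the least `n` (or `∞`) such that
`B` admits a cover by `n + 1` open sets, each carrying a continuous local section of `p`. -/
noncomputable def secat {E B : Type*} [TopologicalSpace E] [TopologicalSpace B]
    (p : C(E, B)) : ℕ∞ :=
  sInf {n : ℕ∞ | ∃ m : ℕ, n = (m : ℕ∞) ∧
    ∃ U : Fin (m + 1) → Set B, (∀ i, IsOpen (U i)) ∧ (⋃ i, U i) = Set.univ ∧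
      ∀ i, ∃ s : C(U i, E), ∀ x : U i, p (s x) = (x : B)}

/-- The Lyusternik–Schnirelmann category of a space `X`: the least `n` (or `∞`) such that `X`
admits a cover by `n + 1` open sets whose inclusions into `X` are null-homotopic. -/
noncomputable def LScat (X : Type*) [TopologicalSpace X] : ℕ∞ :=
  sInf {n : ℕ∞ | ∃ m : ℕ, n = (m : ℕ∞) ∧
    ∃ U : Fin (m + 1) → Set X, (∀ i, IsOpen (U i)) ∧ (⋃ i, U i) = Set.univ ∧
      ∀ i, ∃ x : X,
        ContinuousMap.Homotopic
          (⟨Subtype.val, continuous_subtype_val⟩ : C(U i, X))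
          (ContinuousMap.const (U i) x)}

/-- A map that lifts through a contractible space is nullhomotopic. -/
theorem ContinuousMap.exists_homotopic_const_of_lift {E B X : Type*} [TopologicalSpace E]
    [TopologicalSpace B] [TopologicalSpace X] [ContractibleSpace E] (p : C(E, B)) (f : C(X, B))
    (s : C(X, E)) (hs : ∀ x, p (s x) = f x) :
    ∃ b : B, f.Homotopic (ContinuousMap.const X b) := by
  obtain ⟨e, he⟩ := id_nullhomotopic E
  have hf : f = p.comp ((ContinuousMap.id E).comp s) := by
    ext x
    exact (hs x).symm
  refine ⟨p e, ?_⟩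
  rw [hf]
  exact (ContinuousMap.Homotopic.refl p).comp (he.comp (ContinuousMap.Homotopic.refl s))

/-- A nullhomotopic map into a path-connected base lifts through a fibration with nonempty
total space. -/
theorem IsFibration.exists_lift_of_homotopic_const {E : Type u} {B : Type v}
    [TopologicalSpace E] [TopologicalSpace B] [Nonempty E] [PathConnectedSpace B] {p : C(E, B)}
    (hp : IsFibration p) {X : Type v} [TopologicalSpace X] {f : C(X, B)} {b : B}
    (hf : f.Homotopic (ContinuousMap.const X b)) :
    ∃ s : C(X, E), ∀ x, p (s x) = f x := by
  obtain ⟨e⟩ := ‹Nonempty E›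
  have hconst : (ContinuousMap.const X b).Homotopic (ContinuousMap.const X (p e)) := by
    let γ : Path b (p e) := PathConnectedSpace.somePath b (p e)
    exact ⟨{ toFun := fun z => γ z.1
             continuous_toFun := by fun_prop
             map_zero_left := fun _ => γ.source
             map_one_left := fun _ => γ.target }⟩
  obtain ⟨F⟩ := (hf.trans hconst).symm
  let H : C(ULift.{u} X × I, B) :=
    ⟨fun z => F (z.2, z.1.down), by fun_prop⟩
  obtain ⟨H', hH', -⟩ := hp (ULift.{u} X) inferInstance H (ContinuousMap.const _ e)
    fun z => (F.map_zero_left z.down).symm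
  refine ⟨⟨fun x => H' (ULift.up x, 1), by fun_prop⟩, fun x => ?_⟩
  exact (hH' (ULift.up x, 1)).trans (F.map_one_left x)

/-- For a fibration `p : E → B` with `E` contractible and `B` path-connected,
`secat p = cat B`. -/
theorem secat_eq_LScat {E : Type u} {B : Type v} [TopologicalSpace E] [TopologicalSpace B]
    [ContractibleSpace E] [PathConnectedSpace B] (p : C(E, B)) (hp : IsFibration p) :
    secat p = LScat B := by
  unfold secat LScat
  congr 1
  ext n
  refine exists_congr fun m => and_congr_right fun _ => exists_congr fun U =>
    and_congr_right fun _ => and_congr_right fun _ => forall_congr' fun i => ⟨?_, ?_⟩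
  · rintro ⟨s, hs⟩
    exact ContinuousMap.exists_homotopic_const_of_lift p _ s hs
  · rintro ⟨b, hb⟩
    exact hp.exists_lift_of_homotopic_const hb
end

section
/- Let X and Y be path-connected topological spaces that are homotopy equivalent. Then TC(X) = TC(Y). -/
open scoped ENNReal

/-- The (reduced) topological complexity of a space `X`: the least `n` (or `∞`) such that
`X × X` admits a cover by `n + 1` open sets, each carrying a continuous motion planner,
i.e. a continuous map `s : Uᵢ → P(X)` with `(s z) 0 = z.1` and `(s z) 1 = z.2`. -/
noncomputable def topComplexity (X : Type*) [TopologicalSpace X] : ℕ∞ :=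
  sInf {n : ℕ∞ | ∃ m : ℕ, n = (m : ℕ∞) ∧
    ∃ U : Fin (m + 1) → Set (X × X), (∀ i, IsOpen (U i)) ∧ (⋃ i, U i) = Set.univ ∧
      ∀ i, ∃ s : C(U i, C(unitInterval, X)),
        ∀ z : U i, (s z) 0 = (z : X × X).1 ∧ (s z) 1 = (z : X × X).2}

/-- A continuous motion planner on `U` is the same thing as a homotopy between the two
projections `U → X`. -/
theorem exists_motionPlanner_iff_homotopic {X : Type*} [TopologicalSpace X] (U : Set (X × X)) :
    (∃ s : C(U, C(unitInterval, X)),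
      ∀ z : U, (s z) 0 = (z : X × X).1 ∧ (s z) 1 = (z : X × X).2) ↔
    ContinuousMap.Homotopic (ContinuousMap.fst.restrict U) (ContinuousMap.snd.restrict U) := by
  constructor
  · rintro ⟨s, hs⟩
    exact ⟨{ toContinuousMap := s.uncurry.comp ContinuousMap.prodSwap
             map_zero_left := fun z => (hs z).1
             map_one_left := fun z => (hs z).2 }⟩
  · rintro ⟨H⟩
    exact ⟨(H.toContinuousMap.comp ContinuousMap.prodSwap).curry,
      fun z => ⟨H.apply_zero z, H.apply_one z⟩⟩

/-- Topological complexity does not increase when passing to a space dominated by `X`. -/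
theorem topComplexity_le_of_comp_homotopic_id {X Y : Type*} [TopologicalSpace X]
    [TopologicalSpace Y] (f : C(X, Y)) (g : C(Y, X))
    (hfg : (f.comp g).Homotopic (ContinuousMap.id Y)) :
    topComplexity Y ≤ topComplexity X := by
  refine sInf_le_sInf ?_
  rintro _ ⟨m, rfl, U, hU, hcover, hs⟩
  let G : C(Y × Y, X × X) := g.prodMap g
  refine ⟨m, rfl, fun i => G ⁻¹' U i, fun i => (hU i).preimage G.continuous, ?_, fun i => ?_⟩
  · rw [← Set.preimage_iUnion, hcover, Set.preimage_univ]
  · rw [exists_motionPlanner_iff_homotopic]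
    have hX := (exists_motionPlanner_iff_homotopic (U i)).1 (hs i)
    have hmid := (ContinuousMap.Homotopic.refl f).comp
      (hX.comp (ContinuousMap.Homotopic.refl (G.restrictPreimage (U i))))
    have hfst := hfg.comp
      (ContinuousMap.Homotopic.refl (ContinuousMap.fst.restrict (G ⁻¹' U i)))
    have hsnd := hfg.comp
      (ContinuousMap.Homotopic.refl (ContinuousMap.snd.restrict (G ⁻¹' U i)))
    exact (hfst.symm.trans hmid).trans hsnd

/-- Topological complexity is a homotopy invariant: homotopy equivalent path-connected
spaces have equal topological complexity. -/
theorem topComplexity_eq_of_homotopyEquiv {X Y : Type*} [TopologicalSpace X]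
    [TopologicalSpace Y] [PathConnectedSpace X] [PathConnectedSpace Y]
    (h : ContinuousMap.HomotopyEquiv X Y) :
    topComplexity X = topComplexity Y := by
  exact le_antisymm
    (topComplexity_le_of_comp_homotopic_id h.invFun h.toFun h.left_inv)
    (topComplexity_le_of_comp_homotopic_id h.toFun h.invFun h.right_inv)
end

section
/- Let X be a paracompact path-connected topological space. Then cat(X) ≤ TC(X) ≤ cat(X × X). -/
open scoped ENNReal

/-- A homotopy between two maps `f g : Z → X` is the same as a continuous choice of paths in `X`
from `f z` to `g z`. -/
theorem ContinuousMap.homotopic_iff_exists_pathFamily {Z X : Type*} [TopologicalSpace Z]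
    [TopologicalSpace X] (f g : C(Z, X)) :
    ContinuousMap.Homotopic f g ↔
      ∃ s : C(Z, C(unitInterval, X)), ∀ z, s z 0 = f z ∧ s z 1 = g z := by
  constructor
  · rintro ⟨H⟩
    exact ⟨(H.toContinuousMap.comp ContinuousMap.prodSwap).curry,
      fun z => ⟨H.apply_zero z, H.apply_one z⟩⟩
  · rintro ⟨s, hs⟩
    exact ⟨⟨s.uncurry.comp ContinuousMap.prodSwap, fun z => (hs z).1, fun z => (hs z).2⟩⟩

/-- In a path-connected space any two constant maps are homotopic. -/
theorem ContinuousMap.homotopic_const_of_pathConnected (Z : Type*) {X : Type*}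
    [TopologicalSpace Z] [TopologicalSpace X] [PathConnectedSpace X] (a b : X) :
    ContinuousMap.Homotopic (ContinuousMap.const Z a) (ContinuousMap.const Z b) :=
  (ContinuousMap.homotopic_iff_exists_pathFamily _ _).2
    ⟨ContinuousMap.const Z (PathConnectedSpace.somePath a b).toContinuousMap,
      fun _ => ⟨(PathConnectedSpace.somePath a b).source,
        (PathConnectedSpace.somePath a b).target⟩⟩

theorem LScat_le_topComplexity (X : Type*) [TopologicalSpace X] [Nonempty X] :
    LScat X ≤ topComplexity X := by
  refine sInf_le_sInf ?_
  rintro n ⟨m, rfl, U, hU, hcover, hs⟩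
  obtain ⟨x₀⟩ := ‹Nonempty X›
  refine ⟨m, rfl, fun i => (fun x => (x, x₀)) ⁻¹' U i,
    fun i => (hU i).preimage (by fun_prop), ?_, fun i => ⟨x₀, ?_⟩⟩
  · rw [← Set.preimage_iUnion, hcover, Set.preimage_univ]
  · obtain ⟨s, hs⟩ := hs i
    let j : C((fun x => (x, x₀)) ⁻¹' U i, U i) :=
      ⟨fun x => ⟨(x.1, x₀), x.2⟩, by fun_prop⟩
    exact (ContinuousMap.homotopic_iff_exists_pathFamily _ _).2
      ⟨s.comp j, fun x => hs (j x)⟩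

theorem topComplexity_le_LScat_prod (X : Type*) [TopologicalSpace X] [PathConnectedSpace X] :
    topComplexity X ≤ LScat (X × X) := by
  refine sInf_le_sInf ?_
  rintro n ⟨m, rfl, U, hU, hcover, hnull⟩
  refine ⟨m, rfl, U, hU, hcover, fun i => ?_⟩
  obtain ⟨⟨a, b⟩, h⟩ := hnull i
  have hfst := (ContinuousMap.Homotopic.refl ContinuousMap.fst).comp h
  have hsnd := (ContinuousMap.Homotopic.refl ContinuousMap.snd).comp h
  exact (ContinuousMap.homotopic_iff_exists_pathFamily _ _).1
    ((hfst.trans (ContinuousMap.homotopic_const_of_pathConnected (U i) a b)).trans hsnd.symm)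

/-- For a paracompact path-connected space `X`, `cat X ≤ TC X ≤ cat (X × X)`. -/
theorem LScat_le_topComplexity_le_LScat_prod
    {X : Type*} [TopologicalSpace X] [ParacompactSpace X] [PathConnectedSpace X] :
    LScat X ≤ topComplexity X ∧ topComplexity X ≤ LScat (X × X) :=
  ⟨LScat_le_topComplexity X, topComplexity_le_LScat_prod X⟩
end

section
/- Let X and Y be path-connected metrizable topological spaces. Then TC(X × Y) ≤ TC(X) + TC(Y). -/
open scoped ENNReal

open Set

/-- If `p` and `q` pick the first members containing a point in two finite open covers `U`, `V`
of a metrizable space, the sets `{p = i, q = j}` with constant `i + j` have pairwise disjoint open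
neighbourhoods, which can be taken inside `U i ∩ V j`. -/
lemma exists_isOpen_disjoint_refinement {Z : Type*} [TopologicalSpace Z]
    [TopologicalSpace.MetrizableSpace Z] {m n : ℕ}
    {U : Fin (m + 1) → Set Z} {V : Fin (n + 1) → Set Z}
    (hU : ∀ i, IsOpen (U i)) (hV : ∀ j, IsOpen (V j))
    (hUc : ∀ z, ∃ i, z ∈ U i) (hVc : ∀ z, ∃ j, z ∈ V j) :
    ∃ G : Fin (m + 1) × Fin (n + 1) → Set Z,
      (∀ c, IsOpen (G c)) ∧ (∀ c, G c ⊆ U c.1 ∩ V c.2) ∧ (∀ z, ∃ c, z ∈ G c) ∧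
      ∀ c d, (c.1 : ℕ) + c.2 = d.1 + d.2 → c ≠ d → Disjoint (G c) (G d) := by
  let _ := TopologicalSpace.metrizableSpaceMetric Z
  have first : ∀ {k : ℕ} (W : Fin k → Set Z), (∀ z, ∃ i, z ∈ W i) →
      ∃ p : Z → Fin k, ∀ z, z ∈ W (p z) ∧ ∀ i < p z, z ∉ W i := by
    intro k W hW
    have : ∀ z, ∃ i, z ∈ W i ∧ ∀ j < i, z ∉ W j := fun z => by
      obtain ⟨i, hi, hmin⟩ := WellFounded.has_min wellFounded_lt {i | z ∈ W i} (hW z)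
      exact ⟨i, hi, fun j hj hz => hmin j hz hj⟩
    choose p hp using this
    exact ⟨p, hp⟩
  obtain ⟨p, hp⟩ := first U hUc
  obtain ⟨q, hq⟩ := first V hVc
  let S : Fin (m + 1) × Fin (n + 1) → Set Z := fun c => {z | (p z, q z) = c}
  let O : Fin (m + 1) × Fin (n + 1) → Set Z := fun c =>
    {z | ∀ d, (c.1 : ℕ) + c.2 = d.1 + d.2 → c ≠ d →
      Metric.infEDist z (S c) < Metric.infEDist z (S d)}
  have hO : ∀ c, IsOpen (O c) := by
    intro c
    simp only [O, ofPred_forall]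
    refine isOpen_iInter_of_finite fun d => isOpen_iInter_of_finite fun _ =>
      isOpen_iInter_of_finite fun _ => ?_
    exact isOpen_lt Metric.continuous_infEDist Metric.continuous_infEDist
  refine ⟨fun c => O c ∩ (U c.1 ∩ V c.2), fun c => (hO c).inter ((hU _).inter (hV _)),
    fun c => inter_subset_right, fun z => ⟨(p z, q z), ?_, (hp z).1, (hq z).1⟩, ?_⟩
  · intro d hd hne
    have hz : z ∉ closure (S d) := by
      intro hz
      rw [mem_closure_iff] at hz
      have hlt : p z < d.1 ∨ q z < d.2 := by
        by_contra! h
        obtain ⟨h₁, h₂⟩ := h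
        apply hne
        ext <;> simp only [Fin.le_def] at * <;> omega
      rcases hlt with h | h
      · obtain ⟨y, hy, rfl⟩ := hz _ (hU (p z)) (hp z).1
        exact (hp y).2 _ h hy
      · obtain ⟨y, hy, rfl⟩ := hz _ (hV (q z)) (hq z).1
        exact (hq y).2 _ h hy
    rw [Metric.infEDist_zero_of_mem (show z ∈ S (p z, q z) from rfl)]
    rw [Metric.mem_closure_iff_infEDist_zero] at hz
    exact pos_iff_ne_zero.mpr hz
  · intro c d hcd hne
    rw [Set.disjoint_left]
    rintro z ⟨hc, -⟩ ⟨hd, -⟩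
    exact lt_asymm (hc d hcd hne) (hd c hcd.symm hne.symm)

/-- `s` is a continuous motion planner on `U`. -/
def IsMotionPlannerOn {X : Type*} [TopologicalSpace X]
    (s : X × X → C(unitInterval, X)) (U : Set (X × X)) : Prop :=
  ContinuousOn s U ∧ ∀ z ∈ U, s z 0 = z.1 ∧ s z 1 = z.2

lemma exists_isMotionPlannerOn_iff {X : Type*} [TopologicalSpace X] [Nonempty X]
    (U : Set (X × X)) :
    (∃ s, IsMotionPlannerOn s U) ↔ ∃ s : C(U, C(unitInterval, X)),
      ∀ z : U, (s z) 0 = (z : X × X).1 ∧ (s z) 1 = (z : X × X).2 := by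
  classical
  constructor
  · rintro ⟨s, hs, h⟩
    exact ⟨⟨U.domRestrict s, hs.domRestrict⟩, fun z => h z z.2⟩
  · rintro ⟨s, h⟩
    refine ⟨fun z => if hz : z ∈ U then s ⟨z, hz⟩ else .const _ (Classical.arbitrary X), ?_, ?_⟩
    · rw [continuousOn_iff_continuous_domRestrict]
      convert s.continuous using 1
      ext z : 1
      simp
    · intro z hz
      simpa [hz] using h ⟨z, hz⟩

/-- Motion planners on pairwise disjoint open sets glue to one on the union. -/
lemma exists_isMotionPlannerOn_iUnion {X ι : Type*} [TopologicalSpace X] [Nonempty X]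
    {G : ι → Set (X × X)} (hG : ∀ i, IsOpen (G i)) (hd : Pairwise fun i j => Disjoint (G i) (G j))
    (h : ∀ i, ∃ s, IsMotionPlannerOn s (G i)) :
    ∃ s, IsMotionPlannerOn s (⋃ i, G i) := by
  classical
  choose s hs using h
  let t : X × X → C(unitInterval, X) := fun z =>
    if hz : ∃ i, z ∈ G i then s hz.choose z else .const _ (Classical.arbitrary X)
  have ht : ∀ i, ∀ z ∈ G i, t z = s i z := by
    intro i z hz
    have hex : ∃ i, z ∈ G i := ⟨i, hz⟩
    have : hex.choose = i := by
      by_contra hne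
      exact Set.disjoint_left.mp (hd hne) hex.choose_spec hz
    simp only [t, dif_pos hex, this]
  refine ⟨t, fun z hz => ?_, fun z hz => ?_⟩
  · obtain ⟨i, hi⟩ := mem_iUnion.mp hz
    have hmem := (hG i).mem_nhds hi
    refine (((hs i).1.continuousAt hmem).congr ?_).continuousWithinAt
    filter_upwards [hmem] with y hy using (ht i y hy).symm
  · obtain ⟨i, hi⟩ := mem_iUnion.mp hz
    rw [ht i z hi]
    exact (hs i).2 z hi

/-- Motion planners on factors combine to a motion planner on the product. -/
lemma exists_isMotionPlannerOn_prod {X Y : Type*} [TopologicalSpace X] [TopologicalSpace Y]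
    {U : Set (X × X)} {V : Set (Y × Y)} {G : Set ((X × Y) × (X × Y))}
    (hGU : ∀ z ∈ G, (z.1.1, z.2.1) ∈ U) (hGV : ∀ z ∈ G, (z.1.2, z.2.2) ∈ V)
    (hU : ∃ s, IsMotionPlannerOn s U) (hV : ∃ s, IsMotionPlannerOn s V) :
    ∃ s, IsMotionPlannerOn s G := by
  obtain ⟨s, hs, hs'⟩ := hU
  obtain ⟨t, ht, ht'⟩ := hV
  have hpair : Continuous fun f : C(unitInterval, X) × C(unitInterval, Y) => f.1.prodMk f.2 := by
    refine ContinuousMap.continuous_of_continuous_uncurry _ ?_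
    simp only [Function.uncurry_def, ContinuousMap.prod_eval]
    fun_prop
  refine ⟨fun z => (s (z.1.1, z.2.1)).prodMk (t (z.1.2, z.2.2)), ?_, fun z hz => ?_⟩
  · exact hpair.comp_continuousOn
      ((hs.comp (by fun_prop) hGU).prodMk (ht.comp (by fun_prop) hGV))
  · have h₁ := hs' _ (hGU z hz)
    have h₂ := ht' _ (hGV z hz)
    exact ⟨Prod.ext h₁.1 h₂.1, Prod.ext h₁.2 h₂.2⟩

lemma exists_motionPlanner_cover_of_topComplexity_ne_top {X : Type*} [TopologicalSpace X]
    [Nonempty X] (h : topComplexity X ≠ ⊤) :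
    ∃ m : ℕ, topComplexity X = m ∧ ∃ U : Fin (m + 1) → Set (X × X),
      (∀ i, IsOpen (U i)) ∧ (⋃ i, U i) = univ ∧ ∀ i, ∃ s, IsMotionPlannerOn s (U i) := by
  simp only [exists_isMotionPlannerOn_iff]
  have sInf_mem_of_ne_top : ∀ A : Set ℕ∞, sInf A ≠ ⊤ → sInf A ∈ A := fun A hA =>
    csInf_mem (Set.nonempty_iff_ne_empty.mpr fun he => hA (by rw [he, sInf_empty]))
  exact sInf_mem_of_ne_top _ h

/-- For path-connected metrizable spaces `X` and `Y`, `TC (X × Y) ≤ TC X + TC Y`. -/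
theorem topComplexity_prod_le
    {X Y : Type*} [TopologicalSpace X] [TopologicalSpace Y]
    [TopologicalSpace.MetrizableSpace X] [TopologicalSpace.MetrizableSpace Y]
    [PathConnectedSpace X] [PathConnectedSpace Y] :
    topComplexity (X × Y) ≤ topComplexity X + topComplexity Y := by
  by_cases hX : topComplexity X = ⊤
  · simp [hX]
  by_cases hY : topComplexity Y = ⊤
  · simp [hY]
  have : Nonempty X := PathConnectedSpace.nonempty
  have : Nonempty Y := PathConnectedSpace.nonempty
  obtain ⟨m, hm, U, hU, hUc, hUs⟩ := exists_motionPlanner_cover_of_topComplexity_ne_top hX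
  obtain ⟨n, hn, V, hV, hVc, hVs⟩ := exists_motionPlanner_cover_of_topComplexity_ne_top hY
  obtain ⟨G, hG, hGUV, hGc, hGd⟩ := exists_isOpen_disjoint_refinement
    (U := fun i => (fun z : (X × Y) × (X × Y) => (z.1.1, z.2.1)) ⁻¹' U i)
    (V := fun j => (fun z : (X × Y) × (X × Y) => (z.1.2, z.2.2)) ⁻¹' V j)
    (fun i => (hU i).preimage (by fun_prop)) (fun j => (hV j).preimage (by fun_prop))
    (fun z => iUnion_eq_univ_iff.mp hUc (z.1.1, z.2.1))
    (fun z => iUnion_eq_univ_iff.mp hVc (z.1.2, z.2.2))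
  rw [hm, hn]
  refine sInf_le ⟨m + n, by push_cast; rfl, fun k =>
    ⋃ c : {c : Fin (m + 1) × Fin (n + 1) // (c.1 : ℕ) + c.2 = k}, G c,
    fun k => isOpen_iUnion fun c => hG c, ?_, fun k => ?_⟩
  · refine eq_univ_of_forall fun z => ?_
    obtain ⟨c, hc⟩ := hGc z
    exact mem_iUnion.mpr ⟨⟨c.1 + c.2, by omega⟩, mem_iUnion.mpr ⟨⟨c, rfl⟩, hc⟩⟩
  · rw [← exists_isMotionPlannerOn_iff]
    refine exists_isMotionPlannerOn_iUnion (fun c => hG c) (fun c d hcd => ?_) fun c => ?_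
    · exact hGd c d (c.2.trans d.2.symm) (Subtype.coe_injective.ne hcd)
    · exact exists_isMotionPlannerOn_prod (fun z hz => (hGUV c hz).1)
        (fun z hz => (hGUV c hz).2) (hUs _) (hVs _)
end

section
/- Let n ≥ 1 and d ≥ 1, and let X = (S^d)^{×n} be the product of n copies of the sphere S^d with the product topology. Then TC(X) = n if d is odd, and TC(X) = 2n if d is even. -/
open scoped ENNReal

/-- The unit sphere `S^d ⊆ ℝ^{d+1}` with its subspace topology. -/
noncomputable def unitSphere (d : ℕ) : Type :=
  Metric.sphere (0 : EuclideanSpace ℝ (Fin (d + 1))) 1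

noncomputable instance (d : ℕ) : TopologicalSpace (unitSphere d) :=
  instTopologicalSpaceSubtype

open scoped ContDiff

section NullLagrangian

variable {κ : Type*} [Fintype κ] [DecidableEq κ]

/-- The transposed Jacobian matrix of a self-map of `ℝ^κ`: row `j` is the `j`-th partial
derivative. -/
noncomputable def jacobianT (F : (κ → ℝ) → κ → ℝ) (x : κ → ℝ) : Matrix κ κ ℝ :=
  Matrix.of fun j => fderiv ℝ F x (Pi.single j 1)

/-- The determinant as a continuous multilinear function of the rows. -/
noncomputable def detRowCMM (κ : Type*) [Fintype κ] [DecidableEq κ] :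
    ContinuousMultilinearMap ℝ (fun _ : κ => κ → ℝ) ℝ where
  toMultilinearMap := (Matrix.detRowAlternating (R := ℝ) (n := κ)).toMultilinearMap
  cont := by
    change Continuous fun A : Matrix κ κ ℝ => A.det
    exact continuous_id.matrix_det

theorem contDiff_jacobianT {F : (κ → ℝ) → κ → ℝ} {m n : ℕ∞ω} (hF : ContDiff ℝ n F)
    (h : m + 1 ≤ n) (j : κ) : ContDiff ℝ m fun x => jacobianT F x j :=
  (hF.fderiv_right h).clm_apply contDiff_const

theorem contDiff_det_jacobianT_updateRow {F : (κ → ℝ) → κ → ℝ} (hF : ContDiff ℝ 2 F) (j : κ)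
    (w : κ → ℝ) : ContDiff ℝ 1 fun x => ((jacobianT F x).updateRow j w).det := by
  refine (detRowCMM κ).contDiff.comp (contDiff_pi.2 fun l => ?_)
  by_cases h : l = j
  · subst h
    simpa using contDiff_const
  · simpa [h] using contDiff_jacobianT hF (m := 1) (by norm_num) l

/-- Piola's identity: the cofactor matrix of a Jacobian is divergence free. -/
theorem sum_fderiv_det_jacobianT_updateRow {F : (κ → ℝ) → κ → ℝ} (hF : ContDiff ℝ 2 F)
    (w : κ → ℝ) (x : κ → ℝ) :
    ∑ j, fderiv ℝ (fun y => ((jacobianT F y).updateRow j w).det) x (Pi.single j 1) = 0 := by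
  set H : κ → κ → κ → ℝ :=
    fun j l => fderiv ℝ (fderiv ℝ F) x (Pi.single j 1) (Pi.single l 1) with hH
  have hsymm : ∀ j l, H j l = H l j := fun j l =>
    (hF.contDiffAt (x := x)).isSymmSndFDerivAt (by simp) _ _
  set T : κ → κ → ℝ := fun j l =>
    if l = j then 0 else (((jacobianT F x).updateRow j w).updateRow l (H j l)).det with hT
  have hderiv : ∀ j, fderiv ℝ (fun y => ((jacobianT F y).updateRow j w).det) x
      (Pi.single j 1) = ∑ l, T j l := by
    intro j
    have hd2 : DifferentiableAt ℝ (fderiv ℝ F) x :=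
      ((hF.fderiv_right (m := 1) (by norm_num)).differentiable (by norm_num)) x
    have hrow : ∀ l, HasFDerivAt (fun y => (jacobianT F y).updateRow j w l)
        (if l = j then 0 else
          (ContinuousLinearMap.apply ℝ (κ → ℝ) (Pi.single l 1 : κ → ℝ)) ∘L
            fderiv ℝ (fderiv ℝ F) x) x := by
      intro l
      by_cases h : l = j
      · subst h
        simpa using hasFDerivAt_const (𝕜 := ℝ) w x
      · simp only [h, if_false, Matrix.updateRow_ne, ne_eq, not_false_eq_true]
        exact (ContinuousLinearMap.apply ℝ (κ → ℝ)
          (Pi.single l 1 : κ → ℝ)).hasFDerivAt.comp x hd2.hasFDerivAt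
    have := HasFDerivAt.multilinear_comp (f := detRowCMM κ) hrow
    have h2 : HasFDerivAt (fun y => ((jacobianT F y).updateRow j w).det) _ x := this
    rw [h2.fderiv, sum_apply]
    refine Finset.sum_congr rfl fun l _ => ?_
    by_cases h : l = j
    · subst h
      simp [hT]
    · simp only [h, if_false, hT]
      rfl
  have hanti : ∀ j l, T j l = - T l j := by
    intro j l
    by_cases h : l = j
    · simp [hT, h]
    · have h' : j ≠ l := fun e => h e.symm
      simp only [hT, h, h', if_false]
      rw [hsymm j l]
      have := Matrix.detRowAlternating.map_swap
        (((jacobianT F x).updateRow l w).updateRow j (H l j)) h'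
      refine Eq.trans ?_ this
      change Matrix.det _ = Matrix.det _
      congr 1
      ext a b
      change _ = ((jacobianT F x).updateRow l w).updateRow j (H l j) (Equiv.swap j l a) b
      by_cases ha : a = j
      · subst ha; simp [h, h', Matrix.updateRow_apply]
      · by_cases hb : a = l
        · subst hb; simp [Matrix.updateRow_apply]
        · simp [ha, hb, Matrix.updateRow_apply, Equiv.swap_apply_of_ne_of_ne]
  simp_rw [hderiv]
  have h1 : ∑ j, ∑ l, T j l = ∑ j, ∑ l, T l j := Finset.sum_comm
  have h2 : ∑ j, ∑ l, T j l = - ∑ j, ∑ l, T l j := by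
    simp_rw [← Finset.sum_neg_distrib]
    exact Finset.sum_congr rfl fun j _ => Finset.sum_congr rfl fun l _ => hanti j l
  linarith

/-- The integral of a Jacobian determinant vanishes if one component is replaced by a compactly
supported function. -/
theorem integral_det_jacobianT_updateCol_eq_zero {F : (κ → ℝ) → κ → ℝ} (hF : ContDiff ℝ 2 F)
    {c : (κ → ℝ) → ℝ} (hc : ContDiff ℝ 1 c) (hcs : HasCompactSupport c) (i : κ) :
    MeasureTheory.Integrable (fun x =>
        ((jacobianT F x).updateCol i fun j => fderiv ℝ c x (Pi.single j 1)).det) ∧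
      ∫ x, ((jacobianT F x).updateCol i fun j => fderiv ℝ c x (Pi.single j 1)).det = 0 := by
  set a : κ → (κ → ℝ) → ℝ :=
    fun j y => ((jacobianT F y).updateRow j (Pi.single i 1)).det with ha
  have hac : ∀ j, ContDiff ℝ 1 (a j) := fun j => contDiff_det_jacobianT_updateRow hF j _
  have hda : ∀ j, Continuous fun x => fderiv ℝ (a j) x (Pi.single j 1) := fun j =>
    ((hac j).continuous_fderiv (by norm_num)).clm_apply continuous_const
  have hdc : ∀ j : κ, Continuous fun x => fderiv ℝ c x (Pi.single j 1) := fun j =>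
    (hc.continuous_fderiv (by norm_num)).clm_apply continuous_const
  have hdcs : ∀ j : κ, HasCompactSupport fun x => fderiv ℝ c x (Pi.single j 1) := fun j =>
    (hcs.fderiv (𝕜 := ℝ)).comp_left (g := fun L : (κ → ℝ) →L[ℝ] ℝ => L (Pi.single j 1)) rfl
  have hexp : ∀ x, ((jacobianT F x).updateCol i fun j => fderiv ℝ c x (Pi.single j 1)).det
      = ∑ j, a j x * fderiv ℝ c x (Pi.single j 1) := by
    intro x
    rw [← Matrix.cramer_apply, Matrix.cramer_eq_adjugate_mulVec]
    simp [Matrix.mulVec, dotProduct, Matrix.adjugate_apply, ha]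
  have hint1 : ∀ j : κ, MeasureTheory.Integrable fun x => a j x * fderiv ℝ c x (Pi.single j 1) :=
    fun j => ((hac j).continuous.mul (hdc j)).integrable_of_hasCompactSupport
      (hdcs j).mul_left
  have hint2 : ∀ j : κ, MeasureTheory.Integrable fun x => fderiv ℝ (a j) x (Pi.single j 1) * c x :=
    fun j => ((hda j).mul hc.continuous).integrable_of_hasCompactSupport hcs.mul_left
  have hint3 : ∀ j : κ, MeasureTheory.Integrable fun x => a j x * c x :=
    fun j => ((hac j).continuous.mul hc.continuous).integrable_of_hasCompactSupport hcs.mul_left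
  simp_rw [hexp]
  refine ⟨MeasureTheory.integrable_finsetSum _ fun j _ => hint1 j, ?_⟩
  rw [MeasureTheory.integral_finsetSum _ fun j _ => hint1 j]
  have hparts : ∀ j : κ, ∫ x, a j x * fderiv ℝ c x (Pi.single j 1)
      = - ∫ x, fderiv ℝ (a j) x (Pi.single j 1) * c x := fun j =>
    integral_mul_fderiv_eq_neg_fderiv_mul_of_integrable (hint2 j) (hint1 j) (hint3 j)
      (fun x _ => (hac j).differentiable (by norm_num) x)
      (fun x _ => hc.differentiable (by norm_num) x)
  simp_rw [hparts]
  rw [Finset.sum_neg_distrib, ← MeasureTheory.integral_finsetSum _ fun j _ => hint2 j]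
  simp_rw [← Finset.sum_mul]
  simp [ha, sum_fderiv_det_jacobianT_updateRow hF]

/-- The Jacobian determinant is a null Lagrangian: its integral only depends on the map near
infinity. -/
theorem integral_det_jacobianT_sub_eq_zero {F G : (κ → ℝ) → κ → ℝ} (hF : ContDiff ℝ 2 F)
    (hG : ContDiff ℝ 2 G) (hcs : HasCompactSupport (G - F)) :
    ∫ x, ((jacobianT G x).det - (jacobianT F x).det) = 0 := by
  set P : Finset κ → (κ → ℝ) → κ → ℝ := fun S x k => if k ∈ S then G x k else F x k with hP
  have hPc : ∀ S, ContDiff ℝ 2 (P S) := by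
    intro S
    refine contDiff_pi.2 fun k => ?_
    by_cases h : k ∈ S
    · simpa [hP, h] using contDiff_pi.1 hG k
    · simpa [hP, h] using contDiff_pi.1 hF k
  have key : ∀ S : Finset κ,
      MeasureTheory.Integrable (fun x => (jacobianT (P S) x).det - (jacobianT F x).det) ∧
        ∫ x, ((jacobianT (P S) x).det - (jacobianT F x).det) = 0 := by
    intro S
    induction S using Finset.induction_on with
    | empty => simp [hP]
    | insert i S hi ih =>
      set c : (κ → ℝ) → ℝ := fun x => G x i - F x i with hcdef
      have hc : ContDiff ℝ 2 c := (contDiff_pi.1 hG i).sub (contDiff_pi.1 hF i)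
      have hcs' : HasCompactSupport c := hcs.comp_left (g := fun v : κ → ℝ => v i) rfl
      obtain ⟨hI, hz⟩ := integral_det_jacobianT_updateCol_eq_zero (hPc S)
        (hc.of_le (by norm_num)) hcs' i
      have hstep : ∀ x, (jacobianT (P (insert i S)) x).det - (jacobianT F x).det =
          ((jacobianT (P S) x).updateCol i fun j => fderiv ℝ c x (Pi.single j 1)).det +
            ((jacobianT (P S) x).det - (jacobianT F x).det) := by
        intro x
        have hmat : jacobianT (P (insert i S)) x = (jacobianT (P S) x).updateCol i
            ((fun j => fderiv ℝ c x (Pi.single j 1)) + fun j => jacobianT (P S) x j i) := by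
          have happ : ∀ Q : (κ → ℝ) → κ → ℝ, ContDiff ℝ 2 Q → ∀ j k,
              jacobianT Q x j k = fderiv ℝ (fun y => Q y k) x (Pi.single j 1) := by
            intro Q hQ j k
            rw [fderiv_apply (hQ.differentiable (by norm_num) x)]
            rfl
          ext j k
          by_cases hk : k = i
          · subst hk
            rw [Matrix.updateCol_self, happ _ (hPc _), Pi.add_apply, happ _ (hPc _)]
            simp only [hP, Finset.mem_insert_self, if_true, hi, if_false, hcdef]
            rw [fderiv_fun_sub ((contDiff_pi.1 hG k).differentiable (by norm_num) x)
              ((contDiff_pi.1 hF k).differentiable (by norm_num) x)]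
            simp
          · rw [Matrix.updateCol_ne hk, happ _ (hPc _), happ _ (hPc _)]
            simp [hP, hk]
        rw [hmat, Matrix.det_updateCol_add, Matrix.updateCol_eq_self]
        ring
      simp_rw [hstep]
      exact ⟨hI.add ih.1, by rw [MeasureTheory.integral_add hI ih.1, hz, ih.2, add_zero]⟩
  have := (key Finset.univ).2
  simpa [hP] using this

end NullLagrangian

section DegreeArgument

/-- A smooth step function whose derivative is a bump supported in `(-δ, δ)`. -/
theorem exists_smooth_step {δ : ℝ} (hδ : 0 < δ) : ∃ B : ℝ → ℝ, ContDiff ℝ 2 B ∧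
    (∀ s, 0 ≤ deriv B s) ∧ 0 < deriv B 0 ∧ ∀ s, δ ≤ |s| → deriv B s = 0 := by
  let b : ContDiffBump (0 : ℝ) := ⟨δ / 2, δ, by positivity, by linarith⟩
  have hderiv : ∀ s, HasDerivAt (fun s => ∫ t in (0 : ℝ)..s, b t) (b s) s := fun s =>
    intervalIntegral.integral_hasDerivAt_right (b.continuous.intervalIntegrable _ _)
      (b.continuous.stronglyMeasurableAtFilter _ _) b.continuous.continuousAt
  have hd : deriv (fun s => ∫ t in (0 : ℝ)..s, b t) = b := funext fun s => (hderiv s).deriv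
  refine ⟨fun s => ∫ t in (0 : ℝ)..s, b t, ?_, ?_, ?_, ?_⟩
  · rw [show (2 : ℕ∞ω) = 1 + 1 by norm_num, contDiff_succ_iff_deriv]
    exact ⟨fun s => (hderiv s).differentiableAt, by simp, by rw [hd]; exact b.contDiff⟩
  · intro s; rw [hd]; exact b.nonneg
  · rw [hd, b.one_of_mem_closedBall (by simp [b]; positivity)]; exact one_pos
  · intro s hs
    rw [hd]
    exact b.zero_of_le_dist (by simpa [b, Real.dist_eq] using hs)

theorem IsCompact.exists_pos_forall_le_norm {X V : Type*} [TopologicalSpace X]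
    [NormedAddCommGroup V] {K : Set X} (hK : IsCompact K) {u : X → V} (hu : ContinuousOn u K)
    (h0 : ∀ x ∈ K, u x ≠ 0) : ∃ δ > 0, ∀ x ∈ K, δ ≤ ‖u x‖ :=
  hK.exists_forall_le' hu.norm fun x hx => norm_pos_iff.2 (h0 x hx)

/-- Smooth approximation of a continuous function supported in a compact set `C`, with support in
a prescribed neighbourhood of `C`. -/
theorem exists_contDiff_approx_of_eq_zero {V W : Type*} [NormedAddCommGroup V] [NormedSpace ℝ V]
    [FiniteDimensional ℝ V] [NormedAddCommGroup W] [NormedSpace ℝ W] {g : V → W}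
    (hg : Continuous g) {C C' : Set V} (hC : IsClosed C) (hCC' : C ⊆ interior C')
    (hg0 : ∀ x ∉ C, g x = 0) {ε : ℝ} (hε : 0 < ε) :
    ∃ k : V → W, ContDiff ℝ 2 k ∧ (∀ x, ‖k x - g x‖ < ε) ∧ ∀ x ∉ C', k x = 0 := by
  let t : V → Set W := fun x => {v | ‖v - g x‖ < ε ∧ (x ∉ C' → v = 0)}
  have ht : ∀ x, Convex ℝ (t x) := by
    intro x
    have h1 : Convex ℝ {v : W | ‖v - g x‖ < ε} := by
      simpa [Metric.ball, dist_eq_norm] using convex_ball (g x) ε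
    by_cases hx : x ∈ C'
    · simpa [t, hx] using h1
    · have : t x = {v : W | ‖v - g x‖ < ε} ∩ {0} := by ext v; simp [t, hx]
      rw [this]
      exact h1.inter (convex_singleton 0)
  obtain ⟨k, hk⟩ := exists_contMDiffMap_forall_mem_convex_of_local_const
    (n := 2) (modelWithCornersSelf ℝ V) ht (by
      intro x
      by_cases hx : x ∈ C
      · refine ⟨g x, ?_⟩
        have h1 : ∀ᶠ y in nhds x, ‖g x - g y‖ < ε := by
          have : Filter.Tendsto (fun y => ‖g x - g y‖) (nhds x) (nhds ‖g x - g x‖) :=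
            (continuous_const.sub hg).norm.tendsto x
          rw [sub_self, norm_zero] at this
          exact this.eventually (gt_mem_nhds hε)
        filter_upwards [h1, isOpen_interior.mem_nhds (hCC' hx)] with y hy hy'
        exact ⟨hy, fun h => absurd (interior_subset hy') h⟩
      · refine ⟨0, ?_⟩
        filter_upwards [hC.isOpen_compl.mem_nhds hx] with y hy
        exact ⟨by simpa [hg0 y hy] using hε, fun _ => rfl⟩)
  exact ⟨k, k.contMDiff.contDiff, fun x => (hk x).1, fun x hx => (hk x).2 hx⟩

theorem jacobianT_comp_diagonal {κ : Type*} [Fintype κ] [DecidableEq κ] {B : ℝ → ℝ}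
    (hB : Differentiable ℝ B) {f : (κ → ℝ) → κ → ℝ} {x : κ → ℝ} (hf : DifferentiableAt ℝ f x) :
    jacobianT (fun y k => B (f y k)) x =
      jacobianT f x * Matrix.diagonal fun k => deriv B (f x k) := by
  ext j k
  rw [Matrix.mul_diagonal]
  have hk : ∀ k, HasFDerivAt (fun y => f y k)
      ((ContinuousLinearMap.proj k).comp (fderiv ℝ f x)) x :=
    fun k => hasFDerivAt_pi'.1 hf.hasFDerivAt k
  have : HasFDerivAt (fun y k => B (f y k)) (ContinuousLinearMap.pi fun k =>
      deriv B (f x k) • (ContinuousLinearMap.proj k).comp (fderiv ℝ f x)) x :=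
    hasFDerivAt_pi.2 fun k => (hB (f x k)).hasDerivAt.comp_hasFDerivAt x (hk k)
  simp only [jacobianT, this.fderiv, Matrix.of_apply]
  simp [mul_comm]

/-- A smooth map with positive Jacobian determinant at each of its zeros in `Ω`, of which there is
at least one, cannot be made nonvanishing by a modification inside a compact subset of `Ω`.
Coordinate version. -/
theorem not_nonvanishing_of_det_jacobianT_pos {κ : Type*} [Fintype κ] [DecidableEq κ]
    {Ω C : Set (κ → ℝ)} (hΩ : IsOpen Ω) (hb : Bornology.IsBounded Ω) {f h : (κ → ℝ) → κ → ℝ}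
    (hf : ContDiff ℝ 2 f) (hpos : ∀ x ∈ Ω, f x = 0 → 0 < (jacobianT f x).det) {x₀ : κ → ℝ}
    (hx₀ : x₀ ∈ Ω) (hfx₀ : f x₀ = 0) (hh : ContinuousOn h (closure Ω)) (hC : IsCompact C)
    (hCΩ : C ⊆ Ω) (heq : ∀ x ∈ closure Ω, x ∉ C → h x = f x) (hne : ∀ x ∈ closure Ω, h x ≠ 0) :
    False := by
  have hK : IsCompact (closure Ω) := hb.isCompact_closure
  have hjc : Continuous fun x => (jacobianT f x).det :=
    Continuous.matrix_det (continuous_pi fun j =>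
      (contDiff_jacobianT hf (m := 1) (by norm_num) j).continuous)
  obtain ⟨δ₁, hδ₁, hδ₁'⟩ := hK.exists_pos_forall_le_norm hh hne
  obtain ⟨δ₂, hδ₂, hδ₂'⟩ : ∃ δ > 0, ∀ x ∈ closure Ω ∩ {x | (jacobianT f x).det ≤ 0},
      δ ≤ ‖f x‖ := by
    refine (hK.inter_right (isClosed_le hjc continuous_const)).exists_pos_forall_le_norm
      hf.continuous.continuousOn ?_
    rintro x ⟨hx, hx'⟩ h0
    by_cases hxC : x ∈ C
    · exact absurd (hpos x (hCΩ hxC) h0) (not_lt.2 hx')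
    · exact hne x hx ((heq x hx hxC).trans h0)
  obtain ⟨δ, hδ, hδ1, hδ2⟩ : ∃ δ > 0, δ + δ ≤ δ₁ ∧ δ ≤ δ₂ :=
    ⟨min (δ₁ / 2) δ₂, by positivity, by linarith [min_le_left (δ₁ / 2) δ₂], min_le_right _ _⟩
  obtain ⟨C', hC', hCC', hC'Ω⟩ := exists_compact_between hC hΩ hCΩ
  set g : (κ → ℝ) → κ → ℝ := Ω.indicator (h - f) with hg
  have hg0 : ∀ x ∉ C, g x = 0 := by
    intro x hx
    by_cases hxΩ : x ∈ Ω
    · simp [hg, hxΩ, heq x (subset_closure hxΩ) hx]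
    · simp [hg, hxΩ]
  have hgc : Continuous g := by
    refine continuous_iff_continuousAt.2 fun x => ?_
    by_cases hx : x ∈ C
    · have hxΩ := hΩ.mem_nhds (hCΩ hx)
      have : ContinuousAt (h - f) x :=
        (hh.continuousAt (Filter.mem_of_superset hxΩ subset_closure)).sub hf.continuous.continuousAt
      refine this.congr ?_
      filter_upwards [hxΩ] with y hy
      simp [hg, hy]
    · have : g =ᶠ[nhds x] fun _ => 0 := by
        filter_upwards [hC.isClosed.isOpen_compl.mem_nhds hx] with y hy using hg0 y hy
      exact continuousAt_const.congr this.symm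
  obtain ⟨k, hk, hkg, hk0⟩ :=
    exists_contDiff_approx_of_eq_zero hgc hC.isClosed hCC' hg0 hδ
  obtain ⟨B, hB, hB0, hBpos, hBz⟩ := exists_smooth_step hδ
  have hBd : Differentiable ℝ B := hB.differentiable (by norm_num)
  have hfk : ContDiff ℝ 2 (f + k) := hf.add hk
  set F : (κ → ℝ) → κ → ℝ := fun x i => B (f x i) with hFdef
  set G : (κ → ℝ) → κ → ℝ := fun x i => B ((f + k) x i) with hGdef
  have hF : ContDiff ℝ 2 F := contDiff_pi.2 fun i => hB.comp (contDiff_pi.1 hf i)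
  have hG : ContDiff ℝ 2 G := contDiff_pi.2 fun i => hB.comp (contDiff_pi.1 hfk i)
  have hFd : ∀ x, (jacobianT F x).det = (jacobianT f x).det * ∏ i, deriv B (f x i) := fun x => by
    rw [hFdef, jacobianT_comp_diagonal hBd (hf.differentiable (by norm_num) x), Matrix.det_mul,
      Matrix.det_diagonal]
  have hGd : ∀ x, (jacobianT G x).det =
      (jacobianT (f + k) x).det * ∏ i, deriv B ((f + k) x i) := fun x => by
    rw [hGdef, jacobianT_comp_diagonal hBd (hfk.differentiable (by norm_num) x), Matrix.det_mul,
      Matrix.det_diagonal]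
  have hprod : ∀ v : κ → ℝ, δ ≤ ‖v‖ → ∏ i, deriv B (v i) = 0 := by
    intro v hv
    obtain ⟨i, hi⟩ : ∃ i, δ ≤ ‖v i‖ := by
      by_contra! hcon
      exact absurd ((pi_norm_lt_iff hδ).2 hcon) (not_lt.2 hv)
    exact Finset.prod_eq_zero (Finset.mem_univ i) (hBz _ hi)
  have hGzero : ∀ x ∈ Ω, (jacobianT G x).det = 0 := by
    intro x hx
    rw [hGd, hprod, mul_zero]
    have h1 : (f + k) x = h x + (k x - g x) := by
      simp only [hg, Set.indicator_of_mem hx, Pi.add_apply, Pi.sub_apply]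
      abel
    rw [h1]
    have h2 := norm_sub_le_norm_add (h x) (k x - g x)
    have h3 := hδ₁' x (subset_closure hx)
    have h4 := hkg x
    linarith
  have hFnonneg : ∀ x ∈ Ω, 0 ≤ (jacobianT F x).det := by
    intro x hx
    rw [hFd]
    by_cases hx' : (jacobianT f x).det ≤ 0
    · rw [hprod _ (hδ2.trans (hδ₂' x ⟨subset_closure hx, hx'⟩)), mul_zero]
    · exact mul_nonneg (not_le.1 hx').le (Finset.prod_nonneg fun i _ => hB0 _)
  have houtside : ∀ x ∉ C', (jacobianT G x).det = (jacobianT F x).det := by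
    intro x hx
    have : G =ᶠ[nhds x] F := by
      filter_upwards [hC'.isClosed.isOpen_compl.mem_nhds hx] with y hy
      simp [hGdef, hFdef, hk0 y hy]
    simp [jacobianT, this.fderiv_eq]
  have hdetc : ∀ Q : (κ → ℝ) → κ → ℝ, ContDiff ℝ 2 Q → Continuous fun x => (jacobianT Q x).det :=
    fun Q hQ => Continuous.matrix_det (continuous_pi fun j =>
      (contDiff_jacobianT hQ (m := 1) (by norm_num) j).continuous)
  have hGF : HasCompactSupport (F - G) := HasCompactSupport.intro hC' fun x hx => by
    ext i; simp [hFdef, hGdef, hk0 x hx]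
  have hzero := integral_det_jacobianT_sub_eq_zero hG hF hGF
  refine hzero.not_gt (Continuous.integral_pos_of_hasCompactSupport_nonneg_nonzero (x := x₀)
    ((hdetc F hF).sub (hdetc G hG)) ?_ ?_ ?_)
  · exact HasCompactSupport.intro hC' fun x hx => by simp [houtside x hx]
  · intro x
    by_cases hx : x ∈ Ω
    · simpa [hGzero x hx] using hFnonneg x hx
    · simp [houtside x fun h => hx (hC'Ω h)]
  · simp only [hGzero x₀ hx₀, sub_zero, hFd]
    exact (mul_pos (hpos x₀ hx₀ hfx₀) (Finset.prod_pos fun i _ => by simpa [hfx₀] using hBpos)).ne'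

theorem det_jacobianT_eq {κ : Type*} [Fintype κ] [DecidableEq κ] (F : (κ → ℝ) → κ → ℝ)
    (x : κ → ℝ) : (jacobianT F x).det = LinearMap.det (fderiv ℝ F x : (κ → ℝ) →ₗ[ℝ] κ → ℝ) := by
  rw [← LinearMap.det_toMatrix', ← Matrix.det_transpose]
  rfl

/-- A smooth map with positive Jacobian determinant at each of its zeros in `Ω`, of which there is
at least one, is not homotopic to a nonvanishing map through maps without zeros on `∂Ω`. -/
theorem not_nonvanishing_of_homotopy {V : Type*} [NormedAddCommGroup V] [NormedSpace ℝ V]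
    [FiniteDimensional ℝ V] {Ω : Set V} (hΩ : IsOpen Ω) (hb : Bornology.IsBounded Ω) {f : V → V}
    (hf : ContDiff ℝ 2 f) (hpos : ∀ x ∈ Ω, f x = 0 → 0 < LinearMap.det (fderiv ℝ f x : V →ₗ[ℝ] V))
    {x₀ : V} (hx₀ : x₀ ∈ Ω) (hfx₀ : f x₀ = 0) {H : unitInterval × V → V}
    (hH : ContinuousOn H (Set.univ ×ˢ closure Ω)) (hH0 : ∀ x ∈ closure Ω, H (0, x) = f x)
    (hfr : ∀ t, ∀ x ∈ frontier Ω, H (t, x) ≠ 0) (hH1 : ∀ x ∈ closure Ω, H (1, x) ≠ 0) :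
    False := by
  have hK : IsCompact (closure Ω) := hb.isCompact_closure
  set Z : Set (unitInterval × V) := (Set.univ ×ˢ closure Ω) ∩ H ⁻¹' {0} with hZ
  have hZc : IsCompact Z := by
    have hc : IsCompact ((Set.univ : Set unitInterval) ×ˢ closure Ω) := isCompact_univ.prod hK
    exact hc.of_isClosed_subset
      (hH.preimage_isClosed_of_isClosed hc.isClosed isClosed_singleton) Set.inter_subset_left
  have hA : IsCompact (Prod.snd '' Z) := hZc.image continuous_snd
  have hAΩ : Prod.snd '' Z ⊆ Ω := by
    rintro _ ⟨⟨t, x⟩, ⟨⟨-, hx⟩, hz⟩, rfl⟩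
    by_contra hxΩ
    exact hfr t x ⟨hx, by rwa [hΩ.interior_eq]⟩ hz
  obtain ⟨C, hC, hAC, hCΩ⟩ := exists_compact_between hA hΩ hAΩ
  obtain ⟨τ, hτ0, hτ1, hτ⟩ := exists_continuous_zero_one_of_isClosed
    (s := (interior C)ᶜ) (t := Prod.snd '' Z) isOpen_interior.isClosed_compl hA.isClosed
    (Set.disjoint_left.2 fun x hx hx' => hx (hAC hx'))
  set h : V → V := fun x => H (⟨τ x, hτ x⟩, x) with hh
  have hhc : ContinuousOn h (closure Ω) := by
    refine hH.comp (Continuous.continuousOn ?_) fun x hx => ⟨trivial, hx⟩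
    exact (τ.continuous.subtype_mk _).prodMk continuous_id
  have hhf : ∀ x ∈ closure Ω, x ∉ C → h x = f x := by
    intro x hx hxC
    have : τ x = 0 := hτ0 fun hi => hxC (interior_subset hi)
    rw [← hH0 x hx]
    simp only [hh]
    congr 2
    exact Subtype.ext this
  have hhne : ∀ x ∈ closure Ω, h x ≠ 0 := by
    intro x hx h0
    have hxA : x ∈ Prod.snd '' Z := ⟨(⟨τ x, hτ x⟩, x), ⟨⟨trivial, hx⟩, h0⟩, rfl⟩
    refine hH1 x hx ?_
    rw [← h0]
    simp only [hh]
    congr 2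
    exact Subtype.ext (hτ1 hxA).symm
  let e : V ≃L[ℝ] (Fin (Module.finrank ℝ V) → ℝ) :=
    ContinuousLinearEquiv.ofFinrankEq (by simp)
  have hcl : closure (e.symm ⁻¹' Ω) = e.symm ⁻¹' closure Ω :=
    (e.symm.toHomeomorph.preimage_closure Ω).symm
  refine not_nonvanishing_of_det_jacobianT_pos (Ω := e.symm ⁻¹' Ω) (C := e '' C)
    (f := e ∘ f ∘ e.symm) (h := e ∘ h ∘ e.symm) (x₀ := e x₀)
    (hΩ.preimage e.symm.continuous) ?_
    (e.contDiff.comp (hf.comp e.symm.contDiff)) ?_ (by simpa using hx₀) (by simp [hfx₀]) ?_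
    (hC.image e.continuous) ?_ ?_ ?_
  · rw [← e.image_eq_preimage_symm]
    exact (hK.image e.continuous).isBounded.subset (Set.image_mono subset_closure)
  · intro y hy h0
    have h0' : f (e.symm y) = 0 := by simpa using h0
    rw [det_jacobianT_eq]
    have hfd : fderiv ℝ (e ∘ f ∘ e.symm) y =
        (e : V →L[ℝ] _) ∘L (fderiv ℝ f (e.symm y) ∘L (e.symm : _ →L[ℝ] V)) :=
      (e.hasFDerivAt.comp y (((hf.differentiable (by norm_num)) (e.symm y)).hasFDerivAt.comp y
        e.symm.hasFDerivAt)).fderiv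
    rw [hfd]
    have := LinearMap.det_conj (fderiv ℝ f (e.symm y) : V →ₗ[ℝ] V) e.toLinearEquiv
    have h2 := hpos _ hy h0'
    rw [← this] at h2
    exact h2
  · rw [hcl]
    exact e.continuous.comp_continuousOn (hhc.comp e.symm.continuous.continuousOn fun y hy => hy)
  · rintro _ ⟨x, hx, rfl⟩
    simpa using hCΩ hx
  · intro y hy hyC
    rw [hcl] at hy
    simp only [Function.comp_apply]
    rw [hhf _ hy fun hc => hyC ⟨_, hc, by simp⟩]
  · intro y hy
    rw [hcl] at hy
    simpa using hhne _ hy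

/-- A linear endomorphism connected to the identity by a segment of injective maps has positive
determinant. -/
theorem LinearMap.det_pos_of_segment_injective {V : Type*} [AddCommGroup V] [Module ℝ V]
    [FiniteDimensional ℝ V] (L : V →ₗ[ℝ] V)
    (h : ∀ s ∈ Set.Icc (0 : ℝ) 1, ∀ v, (1 - s) • v + s • L v = 0 → v = 0) :
    0 < LinearMap.det L := by
  let b := Module.finBasis ℝ V
  set D : ℝ → ℝ := fun s => LinearMap.det ((1 - s) • LinearMap.id + s • L) with hD
  have hDc : Continuous D := by
    have : D = fun s => ((1 - s) • (1 : Matrix _ _ ℝ) + s • LinearMap.toMatrix b b L).det := by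
      ext s
      simp only [hD]
      rw [← LinearMap.det_toMatrix b]
      simp
    rw [this]
    fun_prop
  have hne : ∀ s ∈ Set.Icc (0 : ℝ) 1, D s ≠ 0 := by
    intro s hs h0
    have hbot := LinearMap.bot_lt_ker_of_det_eq_zero h0
    obtain ⟨v, hv, hv0⟩ := (Submodule.ne_bot_iff _).1 hbot.ne'
    exact hv0 (h s hs v (by simpa using hv))
  have hD0 : D 0 = 1 := by simp [hD]
  have hD1 : D 1 = LinearMap.det L := by simp [hD]
  by_contra hcon
  rw [← hD1, not_lt] at hcon
  obtain ⟨s, hs, hs0⟩ := intermediate_value_Icc' (zero_le_one' ℝ) hDc.continuousOn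
    (show (0 : ℝ) ∈ Set.Icc (D 1) (D 0) from ⟨hcon, by rw [hD0]; exact zero_le_one⟩)
  exact hne s hs hs0

end DegreeArgument

section NegSwap

variable {E : Type*} [NormedAddCommGroup E]

/-- The self-map `(x, y) ↦ (-y, -ρ x)` of `(S × S)^ι`. -/
def negSwap (ι : Type*) (ρ : C(Metric.sphere (0 : E) 1, Metric.sphere (0 : E) 1)) :
    C(ι ⊕ ι → Metric.sphere (0 : E) 1, ι ⊕ ι → Metric.sphere (0 : E) 1) where
  toFun z := Sum.elim (fun i => -z (.inr i)) fun i => -ρ (z (.inl i))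
  continuous_toFun := continuous_pi <| by rintro (i | i) <;> simp only [Sum.elim] <;> fun_prop

theorem negSwap_homotopic (ι : Type*) {ρ₀ ρ₁ : C(Metric.sphere (0 : E) 1, Metric.sphere (0 : E) 1)}
    (h : ρ₀.Homotopic ρ₁) : (negSwap ι ρ₀).Homotopic (negSwap ι ρ₁) := by
  obtain ⟨F⟩ := h
  exact ⟨{
    toFun q := Sum.elim (fun i => -q.2 (.inr i)) fun i => -F (q.1, q.2 (.inl i))
    continuous_toFun := continuous_pi <| by rintro (i | i) <;> simp only [Sum.elim] <;> fun_prop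
    map_zero_left z := by simp [negSwap]
    map_one_left z := by simp [negSwap] }⟩

end NegSwap

section FixedPoints

open scoped RealInnerProductSpace

variable {E : Type*} [NormedAddCommGroup E] [InnerProductSpace ℝ E]

open Classical in
/-- Radial projection onto the unit sphere, with the value `z₀` at the origin. -/
noncomputable def toUnitSphere (z₀ : Metric.sphere (0 : E) 1) (x : E) : Metric.sphere (0 : E) 1 :=
  if h : x = 0 then z₀ else ⟨‖x‖⁻¹ • x, by
    have : ‖x‖ ≠ 0 := norm_ne_zero_iff.2 h
    simp [norm_smul, this]⟩

theorem coe_toUnitSphere (z₀ : Metric.sphere (0 : E) 1) {x : E} (h : x ≠ 0) :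
    (toUnitSphere z₀ x : E) = ‖x‖⁻¹ • x := by
  simp [toUnitSphere, h]

theorem norm_smul_toUnitSphere (z₀ : Metric.sphere (0 : E) 1) (x : E) :
    ‖x‖ • (toUnitSphere z₀ x : E) = x := by
  by_cases h : x = 0
  · simp [h]
  · rw [coe_toUnitSphere z₀ h, smul_inv_smul₀ (norm_ne_zero_iff.2 h)]

theorem toUnitSphere_of_norm_eq_one (z₀ : Metric.sphere (0 : E) 1) {x : E} (h : ‖x‖ = 1) :
    (toUnitSphere z₀ x : E) = x := by
  simpa [h] using norm_smul_toUnitSphere z₀ x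

theorem continuousOn_toUnitSphere (z₀ : Metric.sphere (0 : E) 1) :
    ContinuousOn (toUnitSphere z₀) {x | x ≠ 0} := by
  rw [continuousOn_iff_continuous_domRestrict, Topology.IsInducing.subtypeVal.continuous_iff]
  have : Continuous fun x : {x : E | x ≠ 0} => ‖(x : E)‖⁻¹ • (x : E) :=
    (continuous_subtype_val.norm.inv₀ fun x => norm_ne_zero_iff.2 x.2).smul continuous_subtype_val
  refine this.congr fun x => ?_
  simp [coe_toUnitSphere z₀ x.2]

/-- If a self-map `G₀` of a product of spheres has a fixed point, and all its fixed points have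
positive index, then every map homotopic to `G₀` has a fixed point. -/
theorem exists_fixedPoint_of_homotopic [FiniteDimensional ℝ E] {ι : Type*} [Fintype ι]
    {G₀ G₁ : C(ι → Metric.sphere (0 : E) 1, ι → Metric.sphere (0 : E) 1)}
    (h : G₀.Homotopic G₁) {f : (ι → E) → ι → E} (hf : ContDiff ℝ 2 f)
    (hfG : ∀ (z : ι → Metric.sphere (0 : E) 1) (r : ι → ℝ), (∀ j, 1 / 2 ≤ r j) →
      ∀ j, f (fun j => r j • (z j : E)) j = r j • (z j : E) - G₀ z j)
    (hpos : ∀ z, G₀ z = z →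
      0 < LinearMap.det (fderiv ℝ f (fun j => (z j : E)) : (ι → E) →ₗ[ℝ] ι → E))
    (hfix : ∃ z, G₀ z = z) : ∃ z, G₁ z = z := by
  classical
  obtain ⟨z₀, hz₀⟩ := hfix
  obtain ⟨F⟩ := h
  by_contra! hG₁
  let Ω : Set (ι → E) := {x | ∀ j, ‖x j‖ ∈ Set.Ioo (1 / 2 : ℝ) 2}
  have hΩ : IsOpen Ω := by
    have : Ω = ⋂ j, {x | ‖x j‖ ∈ Set.Ioo (1 / 2 : ℝ) 2} := by ext; simp [Ω]
    rw [this]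
    exact isOpen_iInter_of_finite fun j => isOpen_Ioo.preimage (continuous_apply j).norm
  have hcl : ∀ x ∈ closure Ω, ∀ j, 1 / 2 ≤ ‖x j‖ := by
    intro x hx j
    have : closure Ω ⊆ {x | 1 / 2 ≤ ‖x j‖} :=
      closure_minimal (fun x hx => (hx j).1.le)
        (isClosed_le continuous_const (continuous_apply j).norm)
    exact this hx
  let N : (ι → E) → ι → Metric.sphere (0 : E) 1 := fun x j => toUnitSphere (z₀ j) (x j)
  let H : unitInterval × (ι → E) → ι → E := fun q j => q.2 j - F (q.1, N q.2) j
  have hNx : ∀ x : ι → E, (fun j => ‖x j‖ • (N x j : E)) = x := fun x =>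
    funext fun j => norm_smul_toUnitSphere _ _
  have hzero : ∀ t x, H (t, x) = 0 → (∀ j, ‖x j‖ = 1) ∧ F (t, N x) = N x := by
    intro t x hx
    have h1 : ∀ j, x j = F (t, N x) j := fun j => sub_eq_zero.1 (congrFun hx j)
    have h2 : ∀ j, ‖x j‖ = 1 := fun j => by 
      rw [h1 j]; exact mem_sphere_zero_iff_norm.1 (Subtype.prop _)
    refine ⟨h2, funext fun j => Subtype.ext ?_⟩
    rw [← h1 j]
    exact (toUnitSphere_of_norm_eq_one _ (h2 j)).symm
  have hf0 : ∀ x ∈ closure Ω, H (0, x) = f x := by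
    intro x hx
    ext1 j
    have := hfG (N x) (fun j => ‖x j‖) (hcl x hx) j
    rw [hNx] at this
    rw [this, congrFun (hNx x) j]
    simp [H]
  have hmem : ∀ x : ι → E, (∀ j, ‖x j‖ = 1) → x ∈ Ω := fun x hx j => by
    rw [hx j]; constructor <;> norm_num
  refine not_nonvanishing_of_homotopy hΩ ?_ hf ?_ (x₀ := fun j => (z₀ j : E)) ?_ ?_ (H := H)
    ?_ hf0 ?_ ?_
  · refine (Metric.isBounded_iff_subset_closedBall 0).2 ⟨2, fun x hx => ?_⟩
    rw [mem_closedBall_zero_iff, pi_norm_le_iff_of_nonneg (by norm_num)]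
    exact fun j => (hx j).2.le
  · intro x hx hfx
    rw [← hf0 x (subset_closure hx)] at hfx
    obtain ⟨h1, h2⟩ := hzero 0 x hfx
    have := hpos (N x) (by simpa using h2)
    rwa [show (fun j => (N x j : E)) = x from
      funext fun j => toUnitSphere_of_norm_eq_one _ (h1 j)] at this
  · exact hmem _ fun j => mem_sphere_zero_iff_norm.1 (z₀ j).2
  · have := hfG z₀ (fun _ => 1) (fun _ => by norm_num)
    simp only [one_smul, hz₀, sub_self] at this
    exact funext this
  · refine continuousOn_pi.2 fun j => ContinuousOn.sub (by fun_prop) ?_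
    refine continuous_subtype_val.comp_continuousOn ((continuous_apply j).comp_continuousOn
      (F.continuous.comp_continuousOn (continuous_fst.continuousOn.prodMk ?_)))
    refine continuousOn_pi.2 fun i => (continuousOn_toUnitSphere (z₀ i)).comp
      (by fun_prop) ?_
    rintro ⟨t, x⟩ ⟨-, hx⟩
    have := hcl x hx i
    exact norm_pos_iff.1 (by linarith)
  · intro t x hx h0
    rw [hΩ.frontier_eq] at hx
    exact hx.2 (hmem x (hzero t x h0).1)
  · intro x hx h0
    exact hG₁ _ (by simpa using (hzero 1 x h0).2)

/-- A self-map of a product of spheres that is homotopic to a constant has a fixed point. -/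
theorem exists_fixedPoint_of_homotopic_const [FiniteDimensional ℝ E] {ι : Type*} [Fintype ι]
    {G : C(ι → Metric.sphere (0 : E) 1, ι → Metric.sphere (0 : E) 1)}
    (z₀ : ι → Metric.sphere (0 : E) 1) (h : (ContinuousMap.const _ z₀).Homotopic G) :
    ∃ z, G z = z := by
  refine exists_fixedPoint_of_homotopic h (f := fun x => x - fun j => (z₀ j : E))
    (contDiff_id.sub contDiff_const) (fun z r _ j => rfl) (fun z _ => ?_) ⟨z₀, rfl⟩
  have : fderiv ℝ (fun x : ι → E => x - fun j => (z₀ j : E)) (fun j => (z j : E)) =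
      ContinuousLinearMap.id ℝ _ := by
    rw [fderiv_sub_const]; exact fderiv_fun_id
  rw [this]
  simp

/-- A smooth map on the whole space that agrees with radial projection outside a small ball. -/
noncomputable def smoothNormalize (x : E) : E :=
  (Real.smoothTransition (8 * ‖x‖ ^ 2 - 1) * ‖x‖⁻¹) • x

theorem smoothNormalize_of_le {x : E} (hx : 1 / 2 ≤ ‖x‖) : smoothNormalize x = ‖x‖⁻¹ • x := by
  rw [smoothNormalize, Real.smoothTransition.one_of_one_le (by nlinarith), one_mul]

theorem contDiff_smoothNormalize : ContDiff ℝ 2 (smoothNormalize : E → E) := by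
  rw [contDiff_iff_contDiffAt]
  intro x
  by_cases hx : x = 0
  · subst hx
    have : (smoothNormalize : E → E) =ᶠ[nhds 0] fun _ => 0 := by
      filter_upwards [Metric.ball_mem_nhds (0 : E) (show (0 : ℝ) < 1 / 4 by norm_num)] with y hy
      rw [mem_ball_zero_iff] at hy
      rw [smoothNormalize, Real.smoothTransition.zero_of_nonpos (by nlinarith [norm_nonneg y])]
      simp
    exact contDiffAt_const.congr_of_eventuallyEq this
  · refine ContDiffAt.smul (ContDiffAt.mul ?_ ?_) contDiffAt_id
    · exact Real.smoothTransition.contDiff.contDiffAt.comp x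
        ((contDiffAt_const.mul (contDiff_norm_sq ℝ).contDiffAt).sub contDiffAt_const)
    · exact (contDiffAt_norm ℝ hx).inv (norm_ne_zero_iff.2 hx)

theorem hasFDerivAt_smoothNormalize {x : E} (hx : ‖x‖ = 1) :
    HasFDerivAt (smoothNormalize : E → E)
      (ContinuousLinearMap.id ℝ E - (innerSL ℝ x).smulRight x) x := by
  have h1 : HasFDerivAt (fun y : E => ‖y‖) (innerSL ℝ x) x := by
    have h := (hasStrictFDerivAt_norm_sq x).hasFDerivAt.sqrt (by simp [hx])
    simp only [Real.sqrt_sq (norm_nonneg _)] at h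
    convert h using 1
    ext v
    simp [hx]
  have h2 : HasFDerivAt (fun y : E => ‖y‖⁻¹ • y)
      (ContinuousLinearMap.id ℝ E - (innerSL ℝ x).smulRight x) x := by
    have h := ((hasDerivAt_inv (by simp [hx])).comp_hasFDerivAt x h1).smul (hasFDerivAt_id x)
    exact h.congr_fderiv (by ext v; simp [hx, sub_eq_add_neg])
  refine h2.congr_of_eventuallyEq ?_
  have : ∀ᶠ y in nhds x, 1 / 2 < ‖y‖ :=
    continuous_norm.continuousAt.eventually (lt_mem_nhds (by norm_num [hx]))
  filter_upwards [this] with y hy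
  exact smoothNormalize_of_le hy.le

/-- The restriction of a linear isometry to the unit sphere. -/
def LinearIsometry.unitSphereMap (R : E →ₗᵢ[ℝ] E) :
    C(Metric.sphere (0 : E) 1, Metric.sphere (0 : E) 1) where
  toFun x := ⟨R x, by simp⟩
  continuous_toFun := by fun_prop

/-- If the reflection in a line is homotopic to the identity of the sphere, then every self-map of
`(S × S)^ι` homotopic to `(x, y) ↦ (-y, -x)` has a fixed point. -/
theorem exists_fixedPoint_of_homotopic_negSwap [FiniteDimensional ℝ E] {ι : Type*} [Fintype ι]
    {p : E} (hp : ‖p‖ = 1)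
    (hR : (LinearIsometry.unitSphereMap (ℝ ∙ p).reflection.toLinearIsometry).Homotopic
      (ContinuousMap.id _))
    {G : C(ι ⊕ ι → Metric.sphere (0 : E) 1, ι ⊕ ι → Metric.sphere (0 : E) 1)}
    (h : (negSwap ι (ContinuousMap.id _)).Homotopic G) : ∃ z, G z = z := by
  classical
  set R := (ℝ ∙ p).reflection with hRdef
  have hRx : ∀ x, R x = (2 * ⟪p, x⟫) • p - x := by
    intro x
    rw [hRdef, Submodule.reflection_singleton_apply, hp]
    simp [mul_smul, two_smul]
  let pr (k : ι ⊕ ι) : (ι ⊕ ι → E) →L[ℝ] E := ContinuousLinearMap.proj k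
  let f : (ι ⊕ ι → E) → ι ⊕ ι → E := fun x => Sum.elim
    (fun i => x (.inl i) + smoothNormalize (x (.inr i)))
    fun i => x (.inr i) + R (smoothNormalize (x (.inl i)))
  refine exists_fixedPoint_of_homotopic ((negSwap_homotopic ι hR).trans h) (f := f) ?_ ?_ ?_ ?_
  · rw [contDiff_pi]
    rintro (i | i)
    · exact (contDiff_apply ℝ E (Sum.inl i)).add
        (contDiff_smoothNormalize.comp (contDiff_apply ℝ E (Sum.inr i)))
    · exact (contDiff_apply ℝ E (Sum.inr i)).add
        (R.contDiff.comp (contDiff_smoothNormalize.comp (contDiff_apply ℝ E (Sum.inl i))))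
  · intro z r hr
    have key : ∀ k, smoothNormalize (r k • (z k : E)) = z k := by
      intro k
      have h0 : 0 < r k := by linarith [hr k]
      have hn : ‖r k • (z k : E)‖ = r k := by simp [norm_smul, abs_of_pos h0]
      rw [smoothNormalize_of_le (by rw [hn]; exact hr k), hn, inv_smul_smul₀ h0.ne']
    rintro (i | i)
    · simp [f, key, negSwap]
    · simp [f, key, negSwap, LinearIsometry.unitSphereMap]
  · intro z hz
    have hz1 : ∀ k, ‖(z k : E)‖ = 1 := fun k => mem_sphere_zero_iff_norm.1 (z k).2
    have hl : ∀ i, (z (.inr i) : E) = -z (.inl i) := by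
      intro i
      have := congrArg (Subtype.val) (congrFun hz (.inl i))
      simp [negSwap] at this
      rw [← this, neg_neg]
    have hr : ∀ i, R (z (.inl i)) = z (.inl i) := by
      intro i
      have := congrArg (Subtype.val) (congrFun hz (.inr i))
      simp [negSwap, LinearIsometry.unitSphereMap, hl] at this
      exact this
    let P (x : E) : E →L[ℝ] E := ContinuousLinearMap.id ℝ E - (innerSL ℝ x).smulRight x
    let L : (ι ⊕ ι → E) →L[ℝ] ι ⊕ ι → E := ContinuousLinearMap.pi <| Sum.elim
      (fun i => pr (.inl i) + (P (z (.inr i))).comp (pr (.inr i)))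
      fun i => pr (.inr i) + (R.toContinuousLinearEquiv : E →L[ℝ] E).comp
        ((P (z (.inl i))).comp (pr (.inl i)))
    have hP : ∀ k, HasFDerivAt smoothNormalize (P (z k)) (pr k fun k => (z k : E)) := fun k =>
      hasFDerivAt_smoothNormalize (hz1 k)
    have hL : HasFDerivAt f L fun k => (z k : E) := by
      rw [hasFDerivAt_pi']
      rintro (i | i)
      · exact (pr (.inl i)).hasFDerivAt.add
          ((hP _).comp (fun k => (z k : E))
            (pr (.inr i)).hasFDerivAt)
      · exact (pr (.inr i)).hasFDerivAt.add
          ((R.toContinuousLinearEquiv : E →L[ℝ] E).hasFDerivAt.comp (fun k => (z k : E))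
            ((hP _).comp (fun k => (z k : E))
              (pr (.inl i)).hasFDerivAt))
    rw [hL.fderiv]
    refine LinearMap.det_pos_of_segment_injective _ fun s hs v hv => ?_
    have hvi : ∀ i, v (.inl i) = 0 ∧ v (.inr i) = 0 := by
      intro i
      set x : E := (z (.inl i) : E) with hx
      have hx1 : ‖x‖ = 1 := hz1 _
      set ξ := v (.inl i)
      set η := v (.inr i)
      have h1 : ξ + s • (η - ⟪x, η⟫ • x) = 0 := by
        have h3 : (1 - s) • ξ + s • (ξ + (η - ⟪(z (.inr i) : E), η⟫ • (z (.inr i) : E))) = 0 :=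
          congrFun hv (.inl i)
        rw [hl, inner_neg_left, neg_smul_neg] at h3
        rw [← h3, sub_smul, one_smul, smul_add]
        abel
      have hxp : x = ⟪p, x⟫ • p := by
        have := hr i
        rw [← hx, hRx, sub_eq_iff_eq_add, ← two_smul ℝ x, mul_smul] at this
        exact ((smul_right_injective E (two_ne_zero (α := ℝ))) this).symm
      have hpx : ⟪p, x⟫ * ⟪p, x⟫ = 1 := by
        have : ⟪x, x⟫ = 1 := by simp [hx1]
        rw [hxp, inner_smul_left, inner_smul_right] at this
        simpa [hp] using this
      have hperp : ⟪p, ξ - ⟪x, ξ⟫ • x⟫ = 0 := by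
        have : ⟪x, ξ⟫ = ⟪p, x⟫ * ⟪p, ξ⟫ := by
          conv_lhs => rw [hxp]
          rw [inner_smul_left]; simp
        rw [inner_sub_right, inner_smul_right, this]
        linear_combination (-⟪p, ξ⟫) * hpx
      have h2 : η - s • (ξ - ⟪x, ξ⟫ • x) = 0 := by
        have hRP : R (ξ - ⟪x, ξ⟫ • x) = -(ξ - ⟪x, ξ⟫ • x) := by
          rw [hRx, hperp]; simp
        have h3 : (1 - s) • η + s • (η + R (ξ - ⟪x, ξ⟫ • x)) = 0 := congrFun hv (.inr i)
        rw [hRP] at h3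
        rw [← h3, sub_smul, one_smul, smul_add, smul_neg]
        abel
      have e1 := congrArg (fun w => ⟪ξ, w⟫) h1
      have e2 := congrArg (fun w => ⟪η, w⟫) h2
      simp only [inner_add_right, inner_sub_right, inner_smul_right, inner_zero_right,
        real_inner_self_eq_norm_sq, real_inner_comm ξ η, real_inner_comm ξ x,
        real_inner_comm η x] at e1 e2
      have e3 : ‖ξ‖ ^ 2 + ‖η‖ ^ 2 = 0 := by linear_combination e1 + e2
      constructor
      · exact norm_eq_zero.1 (by nlinarith [sq_nonneg ‖ξ‖, sq_nonneg ‖η‖])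
      · exact norm_eq_zero.1 (by nlinarith [sq_nonneg ‖ξ‖, sq_nonneg ‖η‖])
    ext1 k
    rcases k with i | i
    · exact (hvi i).1
    · exact (hvi i).2
  · have hp' : p ∈ Metric.sphere (0 : E) 1 := by simpa using hp
    refine ⟨Sum.elim (fun _ => ⟨p, hp'⟩) fun _ => -⟨p, hp'⟩, ?_⟩
    ext1 k
    rcases k with i | i
    · simp [negSwap]
    · apply Subtype.ext
      simp [negSwap, LinearIsometry.unitSphereMap, hRx, two_smul, hp]

end FixedPoints

section LowerBound

open scoped unitInterval

/-- A family of paths over an open set `U` from `a` to `b` extends, after shrinking `U` to a closed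
subset `K`, to a homotopy on the whole space starting at `a`. -/
theorem exists_homotopy_of_planner {M S : Type*} [TopologicalSpace M] [NormalSpace M]
    [TopologicalSpace S] {U K : Set M} (hU : IsOpen U) (hK : IsClosed K) (hKU : K ⊆ U)
    (a b : C(M, S)) (s : C(U, C(I, S))) (hs : ∀ z : U, s z 0 = a z ∧ s z 1 = b z) :
    ∃ F : C(I × M, S), (∀ z, F (0, z) = a z) ∧ ∀ z ∈ K, F (1, z) = b z := by
  classical
  obtain ⟨W, hW, hKW, hWU⟩ := normal_exists_closure_subset hK hU hKU
  obtain ⟨l, hl0, hl1, hl⟩ := exists_continuous_zero_one_of_isClosed hW.isClosed_compl hK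
    (Set.disjoint_compl_left_iff_subset.2 hKW)
  let μ : C(M, I) := ⟨fun z => ⟨l z, hl z⟩, by fun_prop⟩
  have hμ0 : ∀ z, z ∉ closure W → μ z = 0 := fun z hz =>
    Subtype.ext (hl0 fun hzW => hz (subset_closure hzW))
  let F : I × M → S := fun q => if h : q.2 ∈ U then s ⟨q.2, h⟩ (q.1 * μ q.2) else a q.2
  have hF : Continuous F := by
    rw [continuous_iff_continuousAt]
    rintro ⟨t, z⟩
    by_cases hz : z ∈ closure W
    · have hopen : IsOpen {q : I × M | q.2 ∈ U} := hU.preimage continuous_snd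
      refine ContinuousOn.continuousAt (s := {q : I × M | q.2 ∈ U}) ?_
        (hopen.mem_nhds (hWU hz))
      rw [continuousOn_iff_continuous_domRestrict]
      have : Continuous fun q : {q : I × M | q.2 ∈ U} =>
          s ⟨q.1.2, q.2⟩ (q.1.1 * μ q.1.2) := by fun_prop
      refine this.congr fun q => ?_
      have hq : q.1.2 ∈ U := q.2
      simp [F, hq]
    · have : F =ᶠ[nhds (t, z)] fun q => a q.2 := by
        have : {q : I × M | q.2 ∈ (closure W)ᶜ} ∈ nhds (t, z) :=
          (isClosed_closure.isOpen_compl.preimage continuous_snd).mem_nhds hz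
        filter_upwards [this] with q hq
        by_cases hqU : q.2 ∈ U
        · simp [F, hqU, hμ0 _ hq, (hs _).1]
        · simp [F, hqU]
      exact ContinuousAt.congr (by fun_prop) this.symm
  refine ⟨⟨F, hF⟩, fun z => ?_, fun z hz => ?_⟩
  · by_cases hzU : z ∈ U
    · simp [F, hzU, (hs _).1]
    · simp [F, hzU]
  · have : μ z = 1 := Subtype.ext (hl1 hz)
    simp [F, hKU hz, this, (hs _).2]

theorem exists_homotopic_of_planners {M S κ : Type*} [TopologicalSpace M] [NormalSpace M]
    [TopologicalSpace S] [Finite κ] {U : κ → Set M} (hU : ∀ j, IsOpen (U j))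
    (hcov : (⋃ j, U j) = Set.univ) (a b : κ → C(M, S)) (s : ∀ j, C(U j, C(I, S)))
    (hs : ∀ j, ∀ z : U j, s j z 0 = a j z ∧ s j z 1 = b j z) :
    ∃ G : C(M, κ → S), (ContinuousMap.pi a).Homotopic G ∧ ∀ z, ∃ j, G z j = b j z := by
  obtain ⟨K, hKcov, hK, hKU⟩ := exists_iUnion_eq_closed_subset hU
    (fun _ => Set.toFinite _) hcov
  choose F hF0 hF1 using fun j =>
    exists_homotopy_of_planner (hU j) (hK j) (hKU j) (a j) (b j) (s j) (hs j)
  refine ⟨⟨fun z j => F j (1, z), by fun_prop⟩, ⟨{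
    toFun q j := F j q
    continuous_toFun := by fun_prop
    map_zero_left z := by ext1 j; simp [hF0]
    map_one_left z := rfl }⟩, fun z => ?_⟩
  obtain ⟨j, hj⟩ := Set.mem_iUnion.1 (hKcov.symm ▸ Set.mem_univ z : z ∈ ⋃ j, K j)
  exact ⟨j, hF1 j z hj⟩

theorem card_le_topComplexity {X κ : Type*} [TopologicalSpace X] [Fintype κ]
    (h : ∀ U : κ → Set (X × X), (∀ j, IsOpen (U j)) → (⋃ j, U j) = Set.univ →
      (∀ j, ∃ s : C(U j, C(I, X)), ∀ z : U j, (s z) 0 = (z : X × X).1 ∧ (s z) 1 = (z : X × X).2) →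
      False) : (Fintype.card κ : ℕ∞) ≤ topComplexity X := by
  refine le_sInf ?_
  rintro _ ⟨m, rfl, U, hU, hcov, hs⟩
  by_contra hlt
  have hm : m + 1 ≤ Fintype.card κ := by
    rw [not_le, Nat.cast_lt] at hlt; exact hlt
  obtain ⟨e⟩ : Nonempty (Fin (m + 1) ↪ κ) :=
    Function.Embedding.nonempty_of_card_le (by simpa using hm)
  have hg := Function.invFun_surjective e.injective
  refine h (fun j => U (Function.invFun e j)) (fun j => hU _) ?_ fun j => hs _
  rw [hg.iUnion_comp U, hcov]

/-- A lower bound for the topological complexity from a fixed point theorem: if every map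
homotopic to `a` has a fixed point, then no planner on fewer than `card κ + 1` sets exists. -/
theorem card_le_topComplexity_of_fixedPoint {E : Type*} [NormedAddCommGroup E] [NormedSpace ℝ E]
    {X κ : Type*} [TopologicalSpace X] [Fintype κ]
    (π : C(κ → Metric.sphere (0 : E) 1, X × X))
    (a : κ → C(κ → Metric.sphere (0 : E) 1, Metric.sphere (0 : E) 1))
    (φ : κ → C(C(I, X), C(I, Metric.sphere (0 : E) 1)))
    (hφ : ∀ j z γ, γ 0 = (π z).1 → γ 1 = (π z).2 → φ j γ 0 = a j z ∧ φ j γ 1 = -z j)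
    (hfix : ∀ G, (ContinuousMap.pi a).Homotopic G → ∃ z, G z = z) :
    (Fintype.card κ : ℕ∞) ≤ topComplexity X := by
  refine card_le_topComplexity fun U hU hcov hs => ?_
  choose s hs using hs
  obtain ⟨G, hG, hGb⟩ := exists_homotopic_of_planners
    (U := fun j => π ⁻¹' U j) (fun j => (hU j).preimage π.continuous)
    (by rw [← Set.preimage_iUnion, hcov, Set.preimage_univ]) a
    (fun j => ⟨fun z => -z j, by fun_prop⟩)
    (fun j => ((φ j).comp (s j)).comp ⟨fun z => ⟨π z, z.2⟩, by fun_prop⟩)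
    (fun j z => hφ j z _ (hs j _).1 (hs j _).2)
  obtain ⟨z, hz⟩ := hfix G hG
  obtain ⟨j, hj⟩ := hGb z
  rw [hz] at hj
  exact ne_neg_of_mem_unit_sphere ℝ (z j) hj

theorem le_topComplexity_pi_sphere {E : Type*} [NormedAddCommGroup E] [InnerProductSpace ℝ E]
    [FiniteDimensional ℝ E] [Nonempty (Metric.sphere (0 : E) 1)] (ι : Type*) [Fintype ι] :
    (Fintype.card ι : ℕ∞) ≤ topComplexity (ι → Metric.sphere (0 : E) 1) := by
  let z₀ : ι → Metric.sphere (0 : E) 1 := fun _ => Classical.arbitrary _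
  let ν (j : ι) : C(ι → Metric.sphere (0 : E) 1, Metric.sphere (0 : E) 1) :=
    ⟨fun z => -z j, by fun_prop⟩
  refine card_le_topComplexity_of_fixedPoint ⟨fun z => (z₀, z), by fun_prop⟩
    (fun j => ContinuousMap.const _ (-z₀ j)) (fun j => ⟨(ν j).comp, (ν j).continuous_postcomp⟩)
    (fun j z γ h0 h1 => ?_) fun G hG => exists_fixedPoint_of_homotopic_const (fun j => -z₀ j) hG
  simp at h0 h1
  simp [ν, h0, h1]

theorem le_topComplexity_pi_sphere_of_reflection_homotopic {E : Type*} [NormedAddCommGroup E]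
    [InnerProductSpace ℝ E] [FiniteDimensional ℝ E] (ι : Type*) [Fintype ι] {p : E} (hp : ‖p‖ = 1)
    (hR : (LinearIsometry.unitSphereMap (ℝ ∙ p).reflection.toLinearIsometry).Homotopic
      (ContinuousMap.id _)) :
    ((2 * Fintype.card ι : ℕ) : ℕ∞) ≤ topComplexity (ι → Metric.sphere (0 : E) 1) := by
  let ν (j : ι) : C(ι → Metric.sphere (0 : E) 1, Metric.sphere (0 : E) 1) :=
    ⟨fun z => -z j, by fun_prop⟩
  have key := card_le_topComplexity_of_fixedPoint (κ := ι ⊕ ι)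
    (X := ι → Metric.sphere (0 : E) 1) (E := E)
    ⟨fun z => (fun i => z (.inl i), fun i => z (.inr i)), by fun_prop⟩
    (fun k => ⟨fun z => negSwap ι (ContinuousMap.id _) z k, by fun_prop⟩)
    (Sum.elim (fun i => ⟨fun γ => ((ν i).comp γ).comp ⟨unitInterval.symm, by fun_prop⟩,
        (ContinuousMap.continuous_precomp _).comp (ν i).continuous_postcomp⟩)
      fun i => ⟨(ν i).comp, (ν i).continuous_postcomp⟩)
    (fun k z γ h0 h1 => ?_) (fun G hG => exists_fixedPoint_of_homotopic_negSwap hp hR hG)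
  · simpa [two_mul] using key
  · simp at h0 h1
    rcases k with i | i <;> simp [ν, h0, h1, negSwap]

end LowerBound

section Rotation

open scoped RealInnerProductSpace

/-- Rotating in the planes `x, J x` deforms the identity into the reflection in the line `ℝ p`. -/
theorem reflection_homotopic_id {E : Type*} [NormedAddCommGroup E] [InnerProductSpace ℝ E]
    {p : E} (hp : ‖p‖ = 1) (J : E →L[ℝ] E) (hJ : ∀ x, ⟪x, J x⟫ = 0) (hpJ : ∀ x, ⟪p, J x⟫ = 0)
    (hJn : ∀ x, ‖J x‖ ^ 2 = ‖x‖ ^ 2 - ⟪p, x⟫ ^ 2) :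
    (LinearIsometry.unitSphereMap (ℝ ∙ p).reflection.toLinearIsometry).Homotopic
      (ContinuousMap.id _) := by
  have hmem : ∀ (t : ℝ) (x : Metric.sphere (0 : E) 1), ⟪p, (x : E)⟫ • p +
      Real.cos (Real.pi * t) • ((x : E) - ⟪p, (x : E)⟫ • p) + Real.sin (Real.pi * t) • J x ∈
        Metric.sphere (0 : E) 1 := by
    rintro t ⟨x, hx⟩
    rw [mem_sphere_zero_iff_norm] at hx ⊢
    have hsq : ‖⟪p, x⟫ • p + Real.cos (Real.pi * t) • (x - ⟪p, x⟫ • p) +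
        Real.sin (Real.pi * t) • J x‖ ^ 2 = 1 := by
      have hpp : ⟪p, p⟫ = 1 := by simp [hp]
      have hxx : ⟪x, x⟫ = 1 := by simp [hx]
      have hJJ : ⟪J x, J x⟫ = 1 - ⟪p, x⟫ ^ 2 := by
        rw [real_inner_self_eq_norm_sq, hJn, hx]; ring
      rw [← real_inner_self_eq_norm_sq]
      simp only [inner_add_left, inner_add_right, inner_sub_left, inner_sub_right,
        real_inner_smul_left, real_inner_smul_right, hpp, hxx, hJJ, hJ, hpJ, real_inner_comm p x,
        real_inner_comm x (J x), real_inner_comm p (J x)]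
      linear_combination (1 - ⟪p, x⟫ ^ 2) * Real.sin_sq_add_cos_sq (Real.pi * t)
    exact (sq_eq_sq₀ (norm_nonneg _) zero_le_one).1 (by rw [hsq]; norm_num)
  refine ContinuousMap.Homotopic.symm ⟨{
    toFun q := ⟨_, hmem q.1 q.2⟩
    continuous_toFun := Continuous.subtype_mk (by fun_prop) _
    map_zero_left x := ?_
    map_one_left x := ?_ }⟩
  · apply Subtype.ext
    simp
  · apply Subtype.ext
    simp [LinearIsometry.unitSphereMap, Submodule.reflection_singleton_apply, hp, two_smul]
    abel

end Rotation

section UpperBound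

open scoped unitInterval RealInnerProductSpace

theorem ContinuousMap.Homotopic.exists_planner {Y S : Type*} [TopologicalSpace Y]
    [TopologicalSpace S] {u v : C(Y, S)} (h : u.Homotopic v) :
    ∃ s : C(Y, C(I, S)), ∀ y, s y 0 = u y ∧ s y 1 = v y := by
  obtain ⟨F⟩ := h
  refine ⟨ContinuousMap.curry ⟨fun q : Y × I => F (q.2, q.1), by fun_prop⟩, fun y => ?_⟩
  simp

/-- If `S × S` is covered by the `k + 1` cozero sets of continuous functions `l a ≥ 0`, each
carrying a motion planner, then the topological complexity of `S ^ ι` is at most `k * card ι`. -/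
theorem topComplexity_pi_le {S : Type*} [TopologicalSpace S] (ι : Type*) [Fintype ι] {k : ℕ}
    (l : Fin (k + 1) → S × S → ℝ) (hlc : ∀ a, Continuous (l a)) (hl0 : ∀ a q, 0 ≤ l a q)
    (hl : ∀ q, ∃ a, 0 < l a q)
    (hs : ∀ a, ∃ s : C({q | 0 < l a q}, C(I, S)),
      ∀ q : {q | 0 < l a q}, s q 0 = (q : S × S).1 ∧ s q 1 = (q : S × S).2) :
    topComplexity (ι → S) ≤ ((k * Fintype.card ι : ℕ) : ℕ∞) := by
  classical
  choose s hs using hs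
  let f (α : ι → Fin (k + 1)) (z : (ι → S) × (ι → S)) : ℝ := ∏ i, l (α i) (z.1 i, z.2 i)
  let deg (α : ι → Fin (k + 1)) : ℕ := ∑ i, (α i : ℕ)
  have hfc : ∀ α, Continuous (f α) := fun α =>
    continuous_finsetProd _ fun i _ => (hlc (α i)).comp (by fun_prop)
  have hfpos : ∀ α z, 0 < f α z → ∀ i, 0 < l (α i) (z.1 i, z.2 i) := fun α z h i =>
    (hl0 _ _).lt_of_ne' (Finset.prod_ne_zero_iff.1 h.ne' i (Finset.mem_univ i))
  let W (α : ι → Fin (k + 1)) : Set ((ι → S) × (ι → S)) :=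
    {z | 0 < f α z ∧ ∀ β, β ≠ α → deg β = deg α → f β z < f α z}
  have hWo : ∀ α, IsOpen (W α) := by
    intro α
    simp only [W, Set.ofPred_and, Set.ofPred_forall]
    refine (isOpen_lt continuous_const (hfc α)).inter ?_
    exact isOpen_iInter_of_finite fun β => isOpen_iInter_of_finite fun _ =>
      isOpen_iInter_of_finite fun _ => isOpen_lt (hfc β) (hfc α)
  have hWuniq : ∀ α β z, deg α = deg β → z ∈ W α → z ∈ W β → α = β := by
    intro α β z hd hα hβ
    by_contra hne
    exact lt_asymm (hα.2 β (Ne.symm hne) hd.symm) (hβ.2 α hne hd)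
  have hP : ∀ α, ∃ P : C(W α, C(I, ι → S)),
      ∀ z : W α, P z 0 = (z : (ι → S) × (ι → S)).1 ∧ P z 1 = (z : (ι → S) × (ι → S)).2 := by
    intro α
    let P : W α → I → ι → S := fun z t i =>
      s (α i) ⟨(z.1.1 i, z.1.2 i), hfpos α z z.2.1 i⟩ t
    have hPc : Continuous (Function.uncurry P) := by
      refine continuous_pi fun i => ?_
      simp only [Function.uncurry, P]
      fun_prop
    refine ⟨ContinuousMap.curry ⟨_, hPc⟩, fun z => ⟨?_, ?_⟩⟩
    · ext1 i; simp [P, hs]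
    · ext1 i; simp [P, hs]
  choose P hP using hP
  refine sInf_le ⟨_, rfl, fun m => ⋃ α : {α // deg α = m}, W α, fun m =>
    isOpen_iUnion fun α => hWo α, ?_, fun m => ?_⟩
  · refine Set.eq_univ_of_forall fun z => ?_
    have hmin : ∀ i, ∃ a, 0 < l a (z.1 i, z.2 i) ∧ ∀ b, 0 < l b (z.1 i, z.2 i) → a ≤ b := by
      intro i
      obtain ⟨a, ha, hmin⟩ := WellFounded.has_min (wellFounded_lt (α := Fin (k + 1)))
        {a | 0 < l a (z.1 i, z.2 i)} (hl _)
      exact ⟨a, ha, fun b hb => not_lt.1 (hmin b hb)⟩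
    choose α hα hαmin using hmin
    have hdeg : deg α ≤ k * Fintype.card ι := by
      calc deg α ≤ ∑ _i : ι, k := Finset.sum_le_sum fun i _ => Nat.lt_succ_iff.1 (α i).2
        _ = k * Fintype.card ι := by simp [mul_comm]
    refine Set.mem_iUnion.2 ⟨⟨deg α, Nat.lt_succ_iff.2 hdeg⟩, Set.mem_iUnion.2 ⟨⟨α, rfl⟩, ?_⟩⟩
    have hfα : 0 < f α z := Finset.prod_pos fun i _ => hα i
    refine ⟨hfα, fun β hβ hd => ?_⟩
    by_contra hlt
    have hle : ∀ i, α i ≤ β i := fun i =>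
      hαmin i _ (hfpos β z (hfα.trans_le (not_lt.1 hlt)) i)
    refine hβ (funext fun i => ?_)
    have := (Finset.sum_eq_sum_iff_of_le (s := Finset.univ) (f := fun i => (α i : ℕ))
      (g := fun i => (β i : ℕ)) fun i _ => Fin.le_def.1 (hle i)).1 hd.symm i (Finset.mem_univ i)
    exact Fin.ext this.symm
  · let T (α : {α // deg α = m}) : Set (⋃ α : {α // deg α = m}, W α) := {z | z.1 ∈ W α}
    let Q (α : {α // deg α = m}) : C(T α, C(I, ι → S)) :=
      (P α).comp ⟨fun z => ⟨z.1.1, z.2⟩, by fun_prop⟩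
    have hTm : ∀ z, ∃ α, z ∈ T α := fun z =>
      (Set.mem_iUnion.1 z.2).imp fun _ h => h
    have hQ : ∀ α β z (hα : z ∈ T α) (hβ : z ∈ T β), Q α ⟨z, hα⟩ = Q β ⟨z, hβ⟩ := by
      intro α β z hα hβ
      obtain rfl : α = β := Subtype.ext (hWuniq _ _ _ (α.2.trans β.2.symm) hα hβ)
      rfl
    refine ⟨ContinuousMap.liftCover T Q hQ fun z => ?_, fun z => ?_⟩
    · obtain ⟨α, hα⟩ := hTm z
      exact ⟨α, ((hWo α).preimage continuous_subtype_val).mem_nhds hα⟩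
    · obtain ⟨α, hα⟩ := hTm z
      have := ContinuousMap.liftCover_coe (S := T) (φ := Q) (hφ := hQ) (hS := fun z => by
        obtain ⟨α, hα⟩ := hTm z
        exact ⟨α, ((hWo α).preimage continuous_subtype_val).mem_nhds hα⟩) (i := α) ⟨z, hα⟩
      rw [this]
      exact hP α ⟨z.1, hα⟩

variable {E : Type*} [NormedAddCommGroup E] [InnerProductSpace ℝ E]

/-- Maps to the sphere that are nowhere antipodal are homotopic. -/
theorem homotopic_of_forall_ne_neg {Y : Type*} [TopologicalSpace Y]
    (u v : C(Y, Metric.sphere (0 : E) 1)) (h : ∀ y, u y ≠ -v y) : u.Homotopic v := by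
  cases isEmpty_or_nonempty Y with
  | inl hY => exact ⟨ContinuousMap.Homotopy.refl u |>.cast rfl (by ext1 y; exact hY.elim y)⟩
  | inr hY =>
    let z₀ := u hY.some
    have hne : ∀ q : I × Y, (1 - (q.1 : ℝ)) • (u q.2 : E) + (q.1 : ℝ) • (v q.2 : E) ≠ 0 := by
      rintro ⟨t, y⟩ h0
      have h1 := eq_neg_of_add_eq_zero_left h0
      have h2 := congrArg norm h1
      have ht0 : 0 ≤ (t : ℝ) := t.2.1
      have ht1 : 0 ≤ 1 - (t : ℝ) := sub_nonneg.2 t.2.2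
      simp only [norm_neg, norm_smul, Real.norm_eq_abs, abs_of_nonneg ht0, abs_of_nonneg ht1,
        norm_eq_of_mem_sphere, mul_one] at h2
      have ht : (t : ℝ) = 1 / 2 := by linarith
      simp only [ht] at h1
      refine h y (Subtype.ext ?_)
      rw [show (1 : ℝ) - 1 / 2 = 1 / 2 by norm_num, ← smul_neg] at h1
      exact smul_right_injective E (show (1 / 2 : ℝ) ≠ 0 by norm_num) h1
    exact ⟨{
      toFun q := toUnitSphere z₀ ((1 - (q.1 : ℝ)) • (u q.2 : E) + (q.1 : ℝ) • (v q.2 : E))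
      continuous_toFun := (continuousOn_toUnitSphere z₀).comp_continuous (by fun_prop) hne
      map_zero_left y := Subtype.ext <| by
        simp [toUnitSphere_of_norm_eq_one]
      map_one_left y := Subtype.ext <| by
        simp [toUnitSphere_of_norm_eq_one] }⟩

/-- A map to the sphere with an orthogonal companion is homotopic to its antipode. -/
theorem homotopic_neg_of_orthogonal {Y : Type*} [TopologicalSpace Y]
    (u w : C(Y, Metric.sphere (0 : E) 1)) (h : ∀ y, ⟪(u y : E), (w y : E)⟫ = 0) :
    u.Homotopic (-u) := by
  have hw : ∀ y, u y ≠ -w y := by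
    intro y huw
    have := h y
    rw [huw] at this
    simp at this
  have hw' : ∀ y, w y ≠ -(-u) y := by
    intro y huw
    have := h y
    rw [huw] at this
    simp at this
  exact (homotopic_of_forall_ne_neg u w hw).trans (homotopic_of_forall_ne_neg w (-u) hw')

/-- Skew maps `J a` without common kernel give motion planners on products of spheres. -/
theorem topComplexity_pi_sphere_le [Nonempty (Metric.sphere (0 : E) 1)]
    (ι : Type*) [Fintype ι] {k : ℕ} (J : Fin k → E →L[ℝ] E)
    (hJ : ∀ a x, ⟪x, J a x⟫ = 0) (hker : ∀ x, x ≠ 0 → ∃ a, J a x ≠ 0) :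
    topComplexity (ι → Metric.sphere (0 : E) 1) ≤ ((k * Fintype.card ι : ℕ) : ℕ∞) := by
  let z₀ : Metric.sphere (0 : E) 1 := Classical.arbitrary _
  let l : Fin (k + 1) → Metric.sphere (0 : E) 1 × Metric.sphere (0 : E) 1 → ℝ :=
    Fin.cons (fun q => ‖(q.1 : E) + q.2‖) fun a q => ‖(q.1 : E) - q.2‖ * ‖J a q.1‖
  refine topComplexity_pi_le ι l ?_ ?_ ?_ ?_
  · intro a
    cases a using Fin.cases with
    | zero => simp only [l, Fin.cons_zero]; fun_prop
    | succ a => simp only [l, Fin.cons_succ]; fun_prop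
  · intro a q
    cases a using Fin.cases with
    | zero => simp only [l, Fin.cons_zero]; positivity
    | succ a => simp only [l, Fin.cons_succ]; positivity
  · rintro ⟨x, y⟩
    by_cases hxy : (x : E) + y = 0
    · have hx : (x : E) ≠ 0 := ne_zero_of_mem_unit_sphere x
      obtain ⟨a, ha⟩ := hker x hx
      refine ⟨a.succ, ?_⟩
      have hy : (y : E) = -x := (neg_eq_of_add_eq_zero_right hxy).symm
      have h2 : (x : E) - y ≠ 0 := by
        rw [hy, sub_neg_eq_add, ← two_smul ℝ]
        exact smul_ne_zero two_ne_zero hx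
      simp only [l, Fin.cons_succ]
      exact mul_pos (norm_pos_iff.2 h2) (norm_pos_iff.2 ha)
    · exact ⟨0, by simpa [l] using hxy⟩
  · intro a
    let u : C({q | 0 < l a q}, Metric.sphere (0 : E) 1) := ⟨fun q => q.1.1, by fun_prop⟩
    let v : C({q | 0 < l a q}, Metric.sphere (0 : E) 1) := ⟨fun q => q.1.2, by fun_prop⟩
    suffices u.Homotopic v from this.exists_planner
    cases a using Fin.cases with
    | zero =>
      refine homotopic_of_forall_ne_neg u v fun q huv => ?_
      have h0 : (q.1.1 : E) = -q.1.2 := congrArg Subtype.val huv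
      have := q.2
      simp [l, h0] at this
    | succ a =>
      have hq : ∀ q : {q | 0 < l a.succ q}, J a q.1.1 ≠ 0 ∧ q.1.1 ≠ q.1.2 := by
        rintro ⟨⟨x, y⟩, hxy⟩
        have hxy' : 0 < ‖(x : E) - y‖ * ‖J a x‖ := hxy
        constructor
        · rintro (h0 : J a x = 0)
          simp [h0] at hxy'
        · rintro (h0 : x = y)
          simp [h0] at hxy'
      let w : C({q | 0 < l a.succ q}, Metric.sphere (0 : E) 1) :=
        ⟨fun q => toUnitSphere z₀ (J a q.1.1),
          (continuousOn_toUnitSphere z₀).comp_continuous (by fun_prop) fun q => (hq q).1⟩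
      refine (homotopic_neg_of_orthogonal u w fun q => ?_).trans
        (homotopic_of_forall_ne_neg _ _ fun q huv => (hq q).2 (neg_injective huv))
      have : (w q : E) = ‖J a q.1.1‖⁻¹ • J a q.1.1 := coe_toUnitSphere z₀ (hq q).1
      rw [this, inner_smul_right]
      exact mul_eq_zero_of_right _ (hJ a _)

end UpperBound

section SkewMaps

open scoped RealInnerProductSpace

/-- The linear map `x ↦ (ε i * x (σ i))ᵢ`. -/
noncomputable def signedPerm {ι : Type*} [Fintype ι] (σ : Equiv.Perm ι) (ε : ι → ℝ) :
    EuclideanSpace ℝ ι →L[ℝ] EuclideanSpace ℝ ι :=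
  LinearMap.toContinuousLinearMap
    { toFun x := WithLp.toLp 2 fun i => ε i * x (σ i)
      map_add' x y := by ext i; simp [mul_add]
      map_smul' c x := by ext i; simp [mul_left_comm] }

theorem signedPerm_apply {ι : Type*} [Fintype ι] (σ : Equiv.Perm ι) (ε : ι → ℝ)
    (x : EuclideanSpace ℝ ι) (i : ι) : signedPerm σ ε x i = ε i * x (σ i) := rfl

theorem inner_signedPerm_self {ι : Type*} [Fintype ι] {σ : Equiv.Perm ι} {ε : ι → ℝ}
    (hσ : ∀ i, σ (σ i) = i) (hε : ∀ i, ε (σ i) = -ε i) (x : EuclideanSpace ℝ ι) :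
    ⟪x, signedPerm σ ε x⟫ = 0 := by
  have h1 : ⟪x, signedPerm σ ε x⟫ = ∑ i, ε i * x (σ i) * x i := by
    simp [PiLp.inner_apply, signedPerm_apply]
  have h2 : ∑ i, ε i * x (σ i) * x i = ∑ i, -(ε i * x (σ i) * x i) := by
    rw [← Equiv.sum_comp σ]
    refine Finset.sum_congr rfl fun i _ => ?_
    rw [hε, hσ]; ring
  rw [Finset.sum_neg_distrib] at h2
  rw [h1]; linarith

theorem norm_signedPerm_sq {ι : Type*} [Fintype ι] {σ : Equiv.Perm ι} {ε : ι → ℝ}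
    (hε : ∀ i, ε (σ i) = -ε i) (x : EuclideanSpace ℝ ι) :
    ‖signedPerm σ ε x‖ ^ 2 = ∑ i, ε i ^ 2 * x i ^ 2 := by
  rw [EuclideanSpace.norm_sq_eq, ← Equiv.sum_comp σ fun i => ε i ^ 2 * x i ^ 2]
  refine Finset.sum_congr rfl fun i _ => ?_
  rw [signedPerm_apply, hε, Real.norm_eq_abs, sq_abs]; ring

/-- Pairing up the coordinates `0, 1`, then `2, 3`, and so on. -/
theorem exists_signed_pairing (d : ℕ) : ∃ (σ : Equiv.Perm (Fin (d + 1))) (ε : Fin (d + 1) → ℝ),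
    (∀ i, σ (σ i) = i) ∧ (∀ i, ε (σ i) = -ε i) ∧ (∀ i, i ≠ Fin.last d → ε i ^ 2 = 1) ∧
      ε (Fin.last d) = if Even d then 0 else -1 := by
  let τ : Fin (d + 1) → Fin (d + 1) := fun i =>
    if h : (i : ℕ) % 2 = 0 then (if h' : (i : ℕ) = d then i else ⟨i + 1, by omega⟩)
    else ⟨i - 1, by omega⟩
  have hτv : ∀ i, (τ i : ℕ) = if (i : ℕ) % 2 = 0 then (if (i : ℕ) = d then (i : ℕ) else (i : ℕ) + 1)
      else (i : ℕ) - 1 := by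
    intro i
    simp only [τ]
    split_ifs <;> rfl
  have hτ : Function.Involutive τ := by
    intro i
    apply Fin.ext
    rw [hτv, hτv]
    split_ifs <;> omega
  refine ⟨hτ.toPerm, fun i => if (i : ℕ) % 2 = 0 then (if (i : ℕ) = d then 0 else 1) else -1,
    hτ, ?_, ?_, ?_⟩
  · intro i
    simp only [Function.Involutive.coe_toPerm, hτv]
    split_ifs <;> first | omega | simp
  · intro i hi
    have : (i : ℕ) ≠ d := fun h => hi (Fin.ext h)
    dsimp only
    split_ifs <;> simp
  · simp [Nat.even_iff]

end SkewMaps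

section MainTheorem

open scoped RealInnerProductSpace

theorem topComplexity_pi_sphere_of_odd (n : ℕ) {d : ℕ} (hd : Odd d) :
    topComplexity (Fin n → Metric.sphere (0 : EuclideanSpace ℝ (Fin (d + 1))) 1) = (n : ℕ∞) := by
  obtain ⟨σ, ε, hσ, hε, hε1, hεd⟩ := exists_signed_pairing d
  have hsq : ∀ i, ε i ^ 2 = 1 := by
    intro i
    by_cases hi : i = Fin.last d
    · rw [hi, hεd, if_neg (Nat.not_even_iff_odd.2 hd)]; norm_num
    · exact hε1 i hi
  have : Nonempty (Metric.sphere (0 : EuclideanSpace ℝ (Fin (d + 1))) 1) :=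
    ⟨⟨EuclideanSpace.single (Fin.last d) 1, by simp⟩⟩
  apply le_antisymm
  · have := topComplexity_pi_sphere_le (Fin n) (fun _ : Fin 1 => signedPerm σ ε)
      (fun _ x => inner_signedPerm_self hσ hε x) (fun x hx => ⟨0, fun h0 => hx ?_⟩)
    · simpa using this
    · have h := norm_signedPerm_sq hε x
      simp only [h0, hsq, one_mul] at h
      rw [← norm_eq_zero, ← sq_eq_zero_iff, EuclideanSpace.real_norm_sq_eq, ← h]
      simp
  · simpa using le_topComplexity_pi_sphere (E := EuclideanSpace ℝ (Fin (d + 1))) (Fin n)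

theorem topComplexity_pi_sphere_of_even (n : ℕ) {d : ℕ} (hd : Even d) (hd1 : 1 ≤ d) :
    topComplexity (Fin n → Metric.sphere (0 : EuclideanSpace ℝ (Fin (d + 1))) 1) =
      ((2 * n : ℕ) : ℕ∞) := by
  obtain ⟨σ, ε, hσ, hε, hε1, hεd⟩ := exists_signed_pairing d
  rw [if_pos hd] at hεd
  have hsq : ∀ i, ε i ^ 2 = if i = Fin.last d then 0 else 1 := by
    intro i
    split_ifs with hi
    · rw [hi, hεd]; norm_num
    · exact hε1 i hi
  let σ' : Equiv.Perm (Fin (d + 1)) := Fin.revPerm.trans (σ.trans Fin.revPerm)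
  let ε' : Fin (d + 1) → ℝ := fun i => ε (Fin.rev i)
  have hσ' : ∀ i, σ' (σ' i) = i := fun i => by simp [σ', hσ]
  have hε' : ∀ i, ε' (σ' i) = -ε' i := fun i => by simp [σ', ε', hε]
  have : Nonempty (Metric.sphere (0 : EuclideanSpace ℝ (Fin (d + 1))) 1) :=
    ⟨⟨EuclideanSpace.single (Fin.last d) 1, by simp⟩⟩
  apply le_antisymm
  · have := topComplexity_pi_sphere_le (Fin n) ![signedPerm σ ε, signedPerm σ' ε']
      (fun a x => ?_) (fun x hx => ?_)
    · simpa using this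
    · fin_cases a
      · exact inner_signedPerm_self hσ hε x
      · exact inner_signedPerm_self hσ' hε' x
    · by_contra! h0
      have hzero : ∀ {τ : Equiv.Perm (Fin (d + 1))} {η : Fin (d + 1) → ℝ},
          (∀ i, η (τ i) = -η i) → signedPerm τ η x = 0 → ∀ i, η i ^ 2 = 1 → x i = 0 := by
        intro τ η hη h i hi
        have hs := norm_signedPerm_sq hη x
        rw [h, norm_zero, zero_pow two_ne_zero, eq_comm,
          Finset.sum_eq_zero_iff_of_nonneg fun i _ => by positivity] at hs
        simpa [hi] using hs i (Finset.mem_univ i)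
      refine hx (PiLp.ext fun i => ?_)
      by_cases hi : i = Fin.last d
      · refine hzero hε' (h0 1) i (hε1 _ fun h => ?_)
        rw [hi, Fin.rev_last] at h
        have := congrArg Fin.val h
        simp at this
        omega
      · exact hzero hε (h0 0) i (hε1 i hi)
  · have hp : ‖EuclideanSpace.single (Fin.last d) (1 : ℝ)‖ = 1 := by simp
    have := le_topComplexity_pi_sphere_of_reflection_homotopic (Fin n) hp
      (reflection_homotopic_id hp (signedPerm σ ε) (inner_signedPerm_self hσ hε)
        (fun x => ?_) fun x => ?_)
    · simpa using this
    · simp [EuclideanSpace.inner_single_left, signedPerm_apply, hεd]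
    · rw [norm_signedPerm_sq hε, EuclideanSpace.real_norm_sq_eq, Fin.sum_univ_castSucc,
        Fin.sum_univ_castSucc (fun i => x i ^ 2)]
      simp [hsq, EuclideanSpace.inner_single_left]

end MainTheorem

/-- The topological complexity of a product of `n` copies of the sphere `S^d` is `n` when
`d` is odd and `2n` when `d` is even. -/
theorem topComplexity_pi_sphere (n d : ℕ) (hn : 1 ≤ n) (hd : 1 ≤ d) :
    (Odd d → topComplexity (Fin n → unitSphere d) = (n : ℕ∞)) ∧
    (Even d → topComplexity (Fin n → unitSphere d) = ((2 * n : ℕ) : ℕ∞)) :=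
  ⟨fun h => topComplexity_pi_sphere_of_odd n h, fun h => topComplexity_pi_sphere_of_even n h hd⟩
end

section
/- Let n ≥ 2 and d_1, …, d_n ≥ 1, and let X = S^{d_1} ∨ ⋯ ∨ S^{d_n} be the wedge sum, i.e., the quotient of the disjoint union of S^{d_1}, …, S^{d_n} obtained by identifying one chosen basepoint in each sphere to a single point, equipped with the quotient topology. Then TC(X) = 2. -/
open scoped ENNReal

/-- The setoid on the disjoint union of the spheres `S^{d i}` identifying the chosen
basepoints `b i` to a single point. -/
noncomputable def wedgeSetoid {n : ℕ} (d : Fin n → ℕ) (b : ∀ i, unitSphere (d i)) :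
    Setoid (Σ i, unitSphere (d i)) where
  r x y := x = y ∨ (x.2 = b x.1 ∧ y.2 = b y.1)
  iseqv := by
    constructor
    · exact fun x => Or.inl rfl
    · rintro x y (rfl | ⟨h₁, h₂⟩)
      · exact Or.inl rfl
      · exact Or.inr ⟨h₂, h₁⟩
    · rintro x y z (rfl | ⟨h₁, h₂⟩) (rfl | ⟨h₃, h₄⟩)
      · exact Or.inl rfl
      · exact Or.inr ⟨h₃, h₄⟩
      · exact Or.inr ⟨h₁, h₂⟩
      · exact Or.inr ⟨h₁, h₄⟩

/-- The wedge sum `S^{d 0} ∨ ⋯ ∨ S^{d (n-1)}`: the quotient of the disjoint union of the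
spheres identifying one chosen basepoint in each sphere to a single point, with the
quotient topology. -/
noncomputable def WedgeOfSpheres {n : ℕ} (d : Fin n → ℕ) (b : ∀ i, unitSphere (d i)) :
    Type :=
  Quotient (wedgeSetoid d b)

noncomputable instance {n : ℕ} (d : Fin n → ℕ) (b : ∀ i, unitSphere (d i)) :
    TopologicalSpace (WedgeOfSpheres d b) :=
  instTopologicalSpaceQuotient

section Surjectivity

open MeasureTheory Set Polynomial

theorem exists_polynomial_eval_eq_integral_eval₂ {E : Type*} [TopologicalSpace E]
    [MeasurableSpace E] [BorelSpace E] [SecondCountableTopologyEither E ℝ]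
    (μ : Measure E) [IsFiniteMeasureOnCompacts μ]
    {K : Set E} (hK : IsCompact K) (hK' : MeasurableSet K) (P : C(E, ℝ)[X]) :
    ∃ Q : ℝ[X], ∀ t : ℝ, Q.eval t =
      ∫ x in K, P.eval₂ ((Pi.evalRingHom (fun _ : E => ℝ) x).comp
        ContinuousMap.coeFnRingHom) t ∂μ := by
  refine ⟨P.sum fun j a => monomial j (∫ x in K, a x ∂μ), fun t => ?_⟩
  simp only [Polynomial.eval₂_eq_sum, Polynomial.sum_def, Polynomial.eval_finsetSum]
  rw [integral_finsetSum]
  · simp [integral_mul_const]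
  · intro i _
    refine Integrable.mul_const ?_ _
    exact ((P.coeff i).continuous.continuousOn.integrableOn_compact' hK hK')

section Euclidean

variable {m : ℕ}

local notation "𝔼" => EuclideanSpace ℝ (Fin m)

theorem exists_polynomial_eval_eq_integral_mul_det {h : 𝔼 → 𝔼} (hh : ContDiff ℝ 1 h)
    (R c : ℝ) (k : ℕ) :
    ∃ Q : ℝ[X], ∀ t : ℝ, Q.eval t = ∫ x in Metric.closedBall (0 : 𝔼) R,
      (1 + t • fderiv ℝ h x).det * (c - ‖x + t • h x‖ ^ 2) ^ k := by
  have hD : Continuous (fderiv ℝ h) := hh.continuous_fderiv (by simp)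
  have hc := hh.continuous
  let e := (EuclideanSpace.basisFun (Fin m) ℝ).toBasis
  let M : Matrix (Fin m) (Fin m) C(𝔼, ℝ) := Matrix.of fun i j =>
    ⟨fun x => fderiv ℝ h x (e j) i,
      (EuclideanSpace.proj i).continuous.comp (hD.clm_apply continuous_const)⟩
  let P : C(𝔼, ℝ)[X] := (1 + (X : C(𝔼, ℝ)[X]) • M.map C).det *
    (C (ContinuousMap.const _ c) - ∑ i, (C (⟨fun x => x i, by fun_prop⟩ : C(𝔼, ℝ)) +
      X * C (⟨fun x => h x i, by fun_prop⟩ : C(𝔼, ℝ))) ^ 2) ^ k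
  obtain ⟨Q, hQ⟩ := exists_polynomial_eval_eq_integral_eval₂ volume
    (isCompact_closedBall (0 : 𝔼) R) measurableSet_closedBall P
  refine ⟨Q, fun t => (hQ t).trans ?_⟩
  congr 1 with x
  rw [← Polynomial.coe_eval₂RingHom]
  simp only [P, map_mul, map_pow, map_sub, map_sum, map_add, RingHom.map_det]
  congr 1
  · rw [ContinuousLinearMap.det, ← LinearMap.det_toMatrix e]
    congr 1
    ext i j
    simp [M, e, LinearMap.toMatrix_apply, Matrix.one_apply, PiLp.single_apply]
    exact mul_comm _ _
  · rw [EuclideanSpace.norm_sq_eq]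
    simp

theorem integral_det_mul_eq_of_eq_zero {h : 𝔼 → 𝔼} (hh : ContDiff ℝ 1 h) {R : ℝ}
    (hR : ∀ x, R ≤ ‖x‖ → h x = 0) (c : ℝ) (k : ℕ) :
    ∫ x in Metric.closedBall (0 : 𝔼) R, (1 + fderiv ℝ h x).det * (c - ‖x + h x‖ ^ 2) ^ k =
      ∫ x in Metric.closedBall (0 : 𝔼) R, (c - ‖x‖ ^ 2) ^ k := by
  obtain ⟨Q, hQ⟩ := exists_polynomial_eval_eq_integral_mul_det hh R c k
  have hcs : HasCompactSupport h := HasCompactSupport.intro (isCompact_closedBall (0 : 𝔼) R)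
    fun x hx => hR x (by simpa using (not_le.1 (by simpa using hx) : R < ‖x‖).le)
  obtain ⟨L, hL⟩ := hh.lipschitzWith_of_hasCompactSupport hcs (by simp)
  obtain ⟨D, hD⟩ : ∃ D : ℝ, ∀ x, ‖fderiv ℝ h x‖ ≤ D :=
    ⟨L, fun x => norm_fderiv_le_of_lipschitz ℝ hL⟩
  have hdiff : Differentiable ℝ h := hh.differentiable (by simp)
  have hdet : ∃ δ > 0, ∀ A : 𝔼 →L[ℝ] 𝔼, ‖A‖ < δ → 0 < (1 + A).det := by
    have hcont : Continuous fun A : 𝔼 →L[ℝ] 𝔼 => (1 + A).det :=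
      ContinuousLinearMap.continuous_det.comp (by fun_prop)
    have h0 : (0 : ℝ) < (1 + (0 : 𝔼 →L[ℝ] 𝔼)).det := by simp [ContinuousLinearMap.det]
    obtain ⟨δ, hδ, hb⟩ := Metric.mem_nhds_iff.1 (hcont.tendsto 0 (lt_mem_nhds h0))
    exact ⟨δ, hδ, fun A hA => hb (by simpa using hA)⟩
  obtain ⟨δ, hδ, hdet⟩ := hdet
  have hsmall : ∀ᶠ t : ℝ in nhdsWithin 0 (Ioi 0), 0 < t ∧ t * D < δ ∧ t * L < 1 := by
    refine eventually_mem_nhdsWithin.and ((Filter.Eventually.and ?_ ?_).filter_mono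
      nhdsWithin_le_nhds)
    · exact (by fun_prop : Continuous fun t : ℝ => t * D).tendsto 0 (gt_mem_nhds (by simpa))
    · exact (by fun_prop : Continuous fun t : ℝ => t * L).tendsto 0 (gt_mem_nhds (by simp))
  have key : ∀ t : ℝ, 0 < t ∧ t * D < δ ∧ t * L < 1 →
      Q.eval t = ∫ x in Metric.closedBall (0 : 𝔼) R, (c - ‖x‖ ^ 2) ^ k := by
    rintro t ⟨ht0, htD, htL⟩
    have happ : ApproximatesLinearOn (fun x => x + t • h x)
        ((ContinuousLinearEquiv.refl ℝ 𝔼 : 𝔼 ≃L[ℝ] 𝔼) : 𝔼 →L[ℝ] 𝔼) univ (t.toNNReal * L) := by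
      intro x _ y _
      have := hL.dist_le_mul x y
      simp only [ContinuousLinearEquiv.coe_refl, ContinuousLinearMap.coe_id', id_eq]
      rw [show x + t • h x - (y + t • h y) - (x - y) = t • (h x - h y) by module, norm_smul,
        NNReal.coe_mul, Real.coe_toNNReal _ ht0.le, Real.norm_of_nonneg ht0.le, mul_assoc,
        ← dist_eq_norm, ← dist_eq_norm]
      gcongr
    have hlt : Subsingleton 𝔼 ∨ t.toNNReal * L <
        ‖((ContinuousLinearEquiv.refl ℝ 𝔼).symm : 𝔼 →L[ℝ] 𝔼)‖₊⁻¹ := by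
      rcases subsingleton_or_nontrivial 𝔼 with h | h
      · exact .inl h
      · right
        rw [← NNReal.coe_lt_coe]
        simpa [Real.coe_toNNReal _ ht0.le] using htL
    have hinj : Function.Injective fun x => x + t • h x := injOn_univ.1 (happ.injOn hlt)
    have hsurj := happ.surjective hlt
    have himg : (fun x => x + t • h x) '' Metric.closedBall (0 : 𝔼) R =
        Metric.closedBall (0 : 𝔼) R := by
      have hout : ∀ x, x ∉ Metric.closedBall (0 : 𝔼) R → x + t • h x = x := fun x hx => by
        rw [hR x (not_le.1 (by simpa using hx)).le]; simp
      apply Subset.antisymm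
      · rintro _ ⟨x, hx, rfl⟩
        by_contra hn
        have hfix : x + t • h x = x := hinj (hout _ hn)
        exact hn (by simpa only [hfix] using hx)
      · intro y hy
        obtain ⟨x, rfl⟩ := hsurj y
        refine ⟨x, ?_, rfl⟩
        by_contra hn
        simp only [hout x hn] at hy
        exact hn hy
    have hder : ∀ x ∈ Metric.closedBall (0 : 𝔼) R, HasFDerivWithinAt (fun x => x + t • h x)
        (1 + t • fderiv ℝ h x) (Metric.closedBall (0 : 𝔼) R) x := fun x _ =>
      ((hasFDerivAt_id x).add ((hdiff x).hasFDerivAt.const_smul t)).hasFDerivWithinAt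
    have hcv := integral_image_eq_integral_abs_det_fderiv_smul volume measurableSet_closedBall
      hder hinj.injOn (fun y => (c - ‖y‖ ^ 2) ^ k)
    rw [himg] at hcv
    rw [hQ, hcv]
    congr 1 with x
    rw [smul_eq_mul, abs_of_pos]
    refine hdet _ (lt_of_le_of_lt ?_ htD)
    rw [norm_smul, Real.norm_of_nonneg ht0.le]
    gcongr
    exact hD x
  have hQC : Q = C (∫ x in Metric.closedBall (0 : 𝔼) R, (c - ‖x‖ ^ 2) ^ k) := by
    refine Polynomial.eq_of_infinite_eval_eq _ _ ?_
    obtain ⟨r, hr, hsub⟩ := mem_nhdsGT_iff_exists_Ioo_subset.1 hsmall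
    refine Set.Infinite.mono (fun t ht => ?_) (Ioo_infinite hr)
    simpa using key t (hsub ht)
  have := hQ 1
  rw [hQC] at this
  simpa using this.symm

theorem exists_norm_add_lt_of_contDiff {h : 𝔼 → 𝔼} (hh : ContDiff ℝ 1 h) {R ε : ℝ}
    (hR₀ : 0 < R) (hR : ∀ x, R ≤ ‖x‖ → h x = 0) (hε : 0 < ε) : ∃ x, ‖x + h x‖ < ε := by
  by_contra! hfar
  set B := Metric.closedBall (0 : 𝔼) R
  have hB : IsCompact B := isCompact_closedBall _ _
  have hBm : MeasurableSet B := measurableSet_closedBall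
  have hD : Continuous (fderiv ℝ h) := hh.continuous_fderiv (by simp)
  have hdc : Continuous fun x => (1 + fderiv ℝ h x).det :=
    ContinuousLinearMap.continuous_det.comp (by fun_prop)
  have hc := hh.continuous
  obtain ⟨D, hDb⟩ := hB.exists_bound_of_continuousOn hdc.continuousOn
  obtain ⟨S, hS⟩ := hB.exists_bound_of_continuousOn
    (by fun_prop : Continuous fun x => x + h x).continuousOn
  set ρ := min (ε / 2) R
  have hρ : 0 < ρ := by positivity
  have hρε : ρ < ε := lt_of_le_of_lt (min_le_left _ _) (by linarith)
  set c := S ^ 2 + R ^ 2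
  have hS0 : ε ≤ S := (hfar 0).trans (hS 0 (by simp [B, hR₀.le]))
  have hcε : 0 < c - ε ^ 2 := by simp only [c]; nlinarith
  have hcρ : c - ε ^ 2 < c - ρ ^ 2 := by nlinarith
  set V := volume.real B
  set v := volume.real (Metric.closedBall (0 : 𝔼) ρ)
  have hv : 0 < v := ENNReal.toReal_pos (Metric.measure_closedBall_pos volume _ hρ).ne'
    (isCompact_closedBall _ _).measure_lt_top.ne
  have hD0 : 0 ≤ D := (norm_nonneg _).trans (hDb 0 (by simp [B, hR₀.le]))
  have key : ∀ k : ℕ, v * (c - ρ ^ 2) ^ k ≤ D * V * (c - ε ^ 2) ^ k := by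
    intro k
    have h1 := integral_det_mul_eq_of_eq_zero hh hR c k
    have h2 : ‖∫ x in B, (1 + fderiv ℝ h x).det * (c - ‖x + h x‖ ^ 2) ^ k‖ ≤
        D * (c - ε ^ 2) ^ k * volume.real B := by
      refine norm_setIntegral_le_of_norm_le_const hB.measure_lt_top fun x hx => ?_
      have hn : 0 ≤ c - ‖x + h x‖ ^ 2 := by
        have := hS x hx
        have := norm_nonneg (x + h x)
        simp only [c]; nlinarith
      rw [norm_mul, Real.norm_of_nonneg (pow_nonneg hn k)]
      have := hDb x hx
      have := hfar x
      gcongr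
    have h3 : ∫ x in Metric.closedBall (0 : 𝔼) ρ, (c - ρ ^ 2) ^ k ≤
        ∫ x in B, (c - ‖x‖ ^ 2) ^ k := by
      have hci : IntegrableOn (fun x : 𝔼 => (c - ‖x‖ ^ 2) ^ k) B :=
        (by fun_prop : Continuous fun x : 𝔼 =>
          (c - ‖x‖ ^ 2) ^ k).continuousOn.integrableOn_compact hB
      have hsub : Metric.closedBall (0 : 𝔼) ρ ⊆ B :=
        Metric.closedBall_subset_closedBall (min_le_right _ _)
      refine (setIntegral_mono_on ?_ (hci.mono_set hsub) measurableSet_closedBall ?_).trans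
        (setIntegral_mono_set hci ?_ hsub.eventuallyLE)
      · exact integrableOn_const (isCompact_closedBall _ _).measure_lt_top.ne
      · intro x hx
        have : ‖x‖ ≤ ρ := by simpa using hx
        have : 0 ≤ c - ρ ^ 2 := by linarith
        gcongr
      · refine (ae_restrict_iff' hBm).2 (.of_forall fun x hx => ?_)
        have : ‖x‖ ≤ R := by simpa [B] using hx
        have := norm_nonneg x
        refine pow_nonneg ?_ _
        simp only [c]; nlinarith
    rw [setIntegral_const, smul_eq_mul] at h3
    calc _ ≤ _ := h3
      _ = _ := h1.symm
      _ ≤ _ := Real.le_norm_self _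
      _ ≤ _ := h2
      _ = _ := by ring
  have hq : (c - ε ^ 2) / (c - ρ ^ 2) < 1 := (div_lt_one (by linarith)).2 hcρ
  have hDV : 0 ≤ D * V := mul_nonneg hD0 measureReal_nonneg
  obtain ⟨k, hk⟩ := exists_pow_lt_of_lt_one (show 0 < v / (D * V + 1) by positivity) hq
  have hpos : 0 < (c - ρ ^ 2) ^ k := pow_pos (by linarith) _
  rw [div_pow, div_lt_div_iff₀ hpos (by positivity)] at hk
  have := key k
  nlinarith [pow_pos hcε k]

theorem surjective_of_eq_self_of_le_norm {Φ : 𝔼 → 𝔼} (hΦ : Continuous Φ) {R : ℝ}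
    (hR : ∀ x, R ≤ ‖x‖ → Φ x = x) : Function.Surjective Φ := by
  intro y
  by_contra! hy
  set h : 𝔼 → 𝔼 := fun x => Φ (x + y) - y - x
  have hc : Continuous h := by fun_prop
  set r := |R| + ‖y‖ + 1
  have hr : 0 < r := by positivity
  have hsupp : ∀ x, r ≤ ‖x‖ → h x = 0 := fun x hx => by
    have : ‖x‖ ≤ ‖x + y‖ + ‖y‖ := by simpa using norm_sub_le (x + y) y
    have := le_abs_self R
    simp only [h]
    rw [hR _ (by linarith)]
    abel
  have hcs : HasCompactSupport h := HasCompactSupport.intro (isCompact_closedBall (0 : 𝔼) r)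
    fun x hx => hsupp x (not_le.1 (by simpa using hx)).le
  obtain ⟨x₀, -, hx₀⟩ := (isCompact_closedBall (0 : 𝔼) r).exists_isMinOn ⟨0, by simp [hr.le]⟩
    (by fun_prop : Continuous fun x => ‖x + h x‖).continuousOn
  obtain ⟨ε, hε, hfar⟩ : ∃ ε > 0, ∀ x, ε ≤ ‖x + h x‖ := by
    refine ⟨min ‖x₀ + h x₀‖ r, lt_min (norm_pos_iff.2 ?_) hr, fun x => ?_⟩
    · simpa [h, sub_eq_zero] using hy (x₀ + y)
    · rcases le_total ‖x‖ r with hx | hx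
      · exact (min_le_left _ _).trans (hx₀ (by simpa using hx))
      · rw [hsupp x hx, add_zero]
        exact (min_le_right _ _).trans hx
  obtain ⟨δ, hδ, hhδ⟩ := Metric.uniformContinuous_iff.1
    (hcs.uniformContinuous_of_continuous hc) (ε / 2) (half_pos hε)
  obtain ⟨g, hg, hgh⟩ := hc.exists_contDiff_dist_le_of_forall_mem_ball_dist_le
    (lt_min hδ one_pos)
  have hg0 : ∀ x, r + 1 ≤ ‖x‖ → g x = 0 := by
    intro x hx
    have hx0 : h x = 0 := hsupp x (by linarith)
    have := hgh x 0 fun z hz => by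
      have hz1 : dist z x < 1 := (Metric.mem_ball.1 hz).trans_le (min_le_right _ _)
      have : ‖x‖ ≤ ‖z‖ + dist z x := by
        rw [dist_comm, dist_eq_norm]
        simpa using norm_add_le z (x - z)
      rw [hx0, hsupp z (by linarith), dist_self]
    simpa [hx0] using this
  obtain ⟨x, hx⟩ := exists_norm_add_lt_of_contDiff (hg.of_le (by simp)) (by linarith) hg0
    (half_pos hε)
  have h1 : dist (g x) (h x) ≤ ε / 2 :=
    hgh x _ fun z hz => (hhδ ((Metric.mem_ball.1 hz).trans_le (min_le_left _ _))).le
  have h2 : ‖x + h x‖ ≤ ‖x + g x‖ + dist (g x) (h x) := by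
    rw [dist_eq_norm]
    have := norm_sub_le (x + g x) (g x - h x)
    rwa [show x + g x - (g x - h x) = x + h x by abel] at this
  linarith [hfar x]

end Euclidean

/-- A continuous self-map of a finite-dimensional space which is the identity outside a ball is
surjective. -/
theorem surjective_of_eq_self_off_isBounded {E : Type*} [NormedAddCommGroup E] [NormedSpace ℝ E]
    [FiniteDimensional ℝ E] {Φ : E → E} (hΦ : Continuous Φ) {R : ℝ}
    (hR : ∀ x, R ≤ ‖x‖ → Φ x = x) : Function.Surjective Φ := by
  let e := toEuclidean (E := E)
  have hsurj : Function.Surjective fun x => e (Φ (e.symm x)) := by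
    refine surjective_of_eq_self_of_le_norm (by fun_prop) (R := ‖e.toContinuousLinearMap‖ * |R| + 1)
      fun x hx => ?_
    rw [hR, e.apply_symm_apply]
    by_contra! hlt
    have h1 := e.toContinuousLinearMap.le_opNorm (e.symm x)
    have h2 : ‖e.symm x‖ ≤ |R| := hlt.le.trans (le_abs_self R)
    have h3 : ‖x‖ ≤ ‖e.toContinuousLinearMap‖ * |R| := by
      refine le_trans ?_ (mul_le_mul_of_nonneg_left h2 (norm_nonneg _))
      simpa using h1
    linarith
  intro y
  obtain ⟨x, hx⟩ := hsurj (e y)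
  exact ⟨_, e.injective hx⟩

end Surjectivity

section Planners

open Set Metric unitInterval

open Classical in
theorem continuous_dite_of_tsupport_subset {Z Y : Type*} [TopologicalSpace Z] [TopologicalSpace Y]
    {O : Set Z} (hO : IsOpen O) {H : O × I → Y} (hH : Continuous H) {f : Z → Y}
    (hf : Continuous f) (h0 : ∀ z, H (z, 0) = f z) {w : Z → I} (hw : Continuous w)
    {T : Set Z} (hT : IsClosed T) (hTO : T ⊆ O) (hwT : ∀ z, z ∉ T → w z = 0) :
    Continuous fun z => if hz : z ∈ O then H (⟨z, hz⟩, w z) else f z := by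
  rw [continuous_iff_continuousAt]
  intro z
  by_cases hz : z ∈ O
  · have : ContinuousOn (fun z => if hz : z ∈ O then H (⟨z, hz⟩, w z) else f z) O := by
      rw [continuousOn_iff_continuous_domRestrict]
      have : Continuous fun z : O => H (z, w z) := by fun_prop
      refine this.congr fun z => ?_
      simp
    exact this.continuousAt (hO.mem_nhds hz)
  · have hzT : z ∈ Tᶜ := fun h => hz (hTO h)
    refine hf.continuousAt.congr ?_
    filter_upwards [hT.isOpen_compl.mem_nhds hzT] with y hy
    split_ifs with hyO
    · rw [hwT y hy, h0 ⟨y, hyO⟩]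
    · rfl

/-- If `f : Z → Y` becomes homotopic to a constant on `U`, then it is homotopic to a map which is
constant wherever a bump function supported in `U` takes the value `1`. -/
theorem exists_homotopy_eq_of_bump {Z Y : Type*} [TopologicalSpace Z] [TopologicalSpace Y]
    {U : Set Z} (hU : IsOpen U) {H : U × I → Y} (hH : Continuous H) {f : Z → Y}
    (hf : Continuous f) (h0 : ∀ z, H (z, 0) = f z) {p : Y} (h1 : ∀ z, H (z, 1) = p)
    {u : C(Z, ℝ)} (hu : tsupport u ⊆ U) (hu01 : ∀ z, u z ∈ Icc (0 : ℝ) 1) :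
    ∃ F : Z × I → Y, Continuous F ∧ (∀ z, F (z, 0) = f z) ∧ ∀ z, u z = 1 → F (z, 1) = p := by
  classical
  let w : Z × I → I := fun z => z.2 * ⟨u z.1, hu01 z.1⟩
  have hw : Continuous w := by fun_prop
  have := continuous_dite_of_tsupport_subset (Z := Z × I) (O := Prod.fst ⁻¹' U)
    (hU.preimage continuous_fst) (H := fun q => H (⟨q.1.1.1, q.1.2⟩, q.2)) (by fun_prop)
    (f := fun z => f z.1) (by fun_prop) (fun z => h0 ⟨z.1.1, z.2⟩) hw
    ((isClosed_tsupport u).preimage continuous_fst) (preimage_mono hu) (fun z hz => by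
      simp only [w, Subtype.ext_iff]
      simp [image_eq_zero_of_notMem_tsupport hz])
  refine ⟨_, this, fun z => ?_, fun z hz => ?_⟩
  · have hw0 : w (z, 0) = 0 := by simp [w]
    simp only [hw0]
    split_ifs with h
    · exact h0 ⟨z, h⟩
    · rfl
  · have hzU : z ∈ U := hu (subset_tsupport _ (by simp [hz]))
    have hw1 : w (z, 1) = 1 := by simp [w, hz]
    simp [hzU, hw1, h1]

/-- If `U` and `V` cover a product of spheres, then the first projection is essential on `U` or the
second projection is essential on `V`. -/
theorem false_of_homotopies_of_union_eq_univ {E₁ E₂ : Type*}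
    [NormedAddCommGroup E₁] [NormedSpace ℝ E₁] [FiniteDimensional ℝ E₁]
    [NormedAddCommGroup E₂] [NormedSpace ℝ E₂] [FiniteDimensional ℝ E₂]
    {p : sphere (0 : E₁) 1} {q : sphere (0 : E₂) 1}
    {U V : Set (sphere (0 : E₁) 1 × sphere (0 : E₂) 1)} (hU : IsOpen U) (hV : IsOpen V)
    (hUV : U ∪ V = univ)
    {H : U × I → sphere (0 : E₁) 1} (hH : Continuous H) (hH0 : ∀ z, H (z, 0) = z.1.1)
    (hH1 : ∀ z, H (z, 1) = p)
    {K : V × I → sphere (0 : E₂) 1} (hK : Continuous K) (hK0 : ∀ z, K (z, 0) = z.1.2)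
    (hK1 : ∀ z, K (z, 1) = q) : False := by
  classical
  obtain ⟨W, hWo, hVW, hWU⟩ := normal_exists_closure_subset hV.isClosed_compl hU
    (fun z hz => (hUV.symm ▸ mem_univ z : z ∈ U ∪ V).resolve_right hz)
  obtain ⟨u, hu, hu1, hu01⟩ := exists_tsupport_one_of_isOpen_isClosed hU
    isClosed_closure.isCompact isClosed_closure hWU
  obtain ⟨v, hv, hv1, hv01⟩ := exists_tsupport_one_of_isOpen_isClosed hV
    isClosed_closure.isCompact hWo.isClosed_compl (compl_subset_comm.1 hVW)
  obtain ⟨F, hF, hF0, hF1⟩ := exists_homotopy_eq_of_bump hU hH continuous_fst hH0 hH1 hu hu01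
  obtain ⟨G, hG, hG0, hG1⟩ := exists_homotopy_eq_of_bump hV hK continuous_snd hK0 hK1 hv hv01
  have hFG : ∀ z, F (z, 1) = p ∨ G (z, 1) = q := fun z => by
    by_cases hz : z ∈ W
    · exact .inl (hF1 z (hu1 (subset_closure hz)))
    · exact .inr (hG1 z (hv1 hz))
  let O : Set (E₁ × E₂) := {z | z.1 ≠ 0 ∧ z.2 ≠ 0}
  have hO : IsOpen O :=
    (isOpen_ne.preimage continuous_fst).inter (isOpen_ne.preimage continuous_snd)
  let T : Set (E₁ × E₂) := {z | |‖z.1‖ - 1| + |‖z.2‖ - 1| ≤ 1 / 2}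
  have hT : IsClosed T := isClosed_le (by fun_prop) (by fun_prop)
  have hTO : T ⊆ O := fun z hz => by
    have hz : |‖z.1‖ - 1| + |‖z.2‖ - 1| ≤ 1 / 2 := hz
    constructor <;> intro h0 <;> rw [h0] at hz <;> norm_num at hz
    · linarith [abs_nonneg (‖z.2‖ - 1)]
    · linarith [abs_nonneg (‖z.1‖ - 1)]
  let w : E₁ × E₂ → I := fun z => projIcc 0 1 zero_le_one (1 - 2 * (|‖z.1‖ - 1| + |‖z.2‖ - 1|))
  have hw : Continuous w := continuous_projIcc.comp (by fun_prop)
  have hwT : ∀ z, z ∉ T → w z = 0 := fun z hz => by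
    have hz : 1 / 2 < |‖z.1‖ - 1| + |‖z.2‖ - 1| := not_le.1 hz
    exact projIcc_of_le_left _ (by linarith)
  let dir : O → sphere (0 : E₁) 1 × sphere (0 : E₂) 1 := fun z =>
    (⟨‖z.1.1‖⁻¹ • z.1.1, by simp [norm_smul, norm_ne_zero_iff.2 z.2.1]⟩,
      ⟨‖z.1.2‖⁻¹ • z.1.2, by simp [norm_smul, norm_ne_zero_iff.2 z.2.2]⟩)
  have hdir : Continuous dir := by
    refine Continuous.prodMk (Continuous.subtype_mk ?_ _) (Continuous.subtype_mk ?_ _)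
    · exact Continuous.smul (Continuous.inv₀ (by fun_prop) fun z => norm_ne_zero_iff.2 z.2.1)
        (by fun_prop)
    · exact Continuous.smul (Continuous.inv₀ (by fun_prop) fun z => norm_ne_zero_iff.2 z.2.2)
        (by fun_prop)
  have h₁ := continuous_dite_of_tsupport_subset hO
    (H := fun z => ‖z.1.1.1‖ • (F (dir z.1, z.2) : E₁)) (by fun_prop) continuous_fst
    (fun z => by simp [hF0, dir, smul_smul, norm_ne_zero_iff.2 z.2.1]) hw hT hTO hwT
  have h₂ := continuous_dite_of_tsupport_subset hO
    (H := fun z => ‖z.1.1.2‖ • (G (dir z.1, z.2) : E₂)) (by fun_prop) continuous_snd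
    (fun z => by simp [hG0, dir, smul_smul, norm_ne_zero_iff.2 z.2.2]) hw hT hTO hwT
  have hp := norm_eq_of_mem_sphere p
  have hq := norm_eq_of_mem_sphere q
  have hsurj := surjective_of_eq_self_off_isBounded (h₁.prodMk h₂) (R := 3) fun z hz => by
    have hzT : z ∉ T := fun hzT => by
      have hzT : |‖z.1‖ - 1| + |‖z.2‖ - 1| ≤ 1 / 2 := hzT
      have h1 := le_abs_self (‖z.1‖ - 1)
      have h2 := le_abs_self (‖z.2‖ - 1)
      have h3 := abs_nonneg (‖z.1‖ - 1)
      have h4 := abs_nonneg (‖z.2‖ - 1)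
      rcases le_max_iff.1 (Prod.norm_def z ▸ hz) with h | h <;> linarith
    rw [hwT z hzT]
    by_cases hzO : z ∈ O
    · simp only [hzO, dite_true, hF0, hG0, dir]
      simp [smul_smul, norm_ne_zero_iff.2 hzO.1, norm_ne_zero_iff.2 hzO.2]
    · simp only [hzO, dite_false]
  obtain ⟨z, hz⟩ := hsurj (-(p : E₁), -(q : E₂))
  obtain ⟨hz1, hz2⟩ := Prod.ext_iff.1 hz
  by_cases hzO : z ∈ O
  · simp only [hzO, dite_true] at hz1 hz2
    have hn1 : ‖z.1‖ = 1 := by simpa [norm_smul, hp] using congrArg norm hz1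
    have hn2 : ‖z.2‖ = 1 := by simpa [norm_smul, hq] using congrArg norm hz2
    have hw1 : w z = 1 := by
      simp only [w, hn1, hn2]
      exact projIcc_of_right_le _ (by norm_num)
    rw [hn1, one_smul, hw1] at hz1
    rw [hn2, one_smul, hw1] at hz2
    rcases hFG (dir ⟨z, hzO⟩) with h | h
    · rw [h, eq_neg_iff_add_eq_zero, ← two_smul ℝ, smul_eq_zero_iff_right two_ne_zero] at hz1
      simp [hz1] at hp
    · rw [h, eq_neg_iff_add_eq_zero, ← two_smul ℝ, smul_eq_zero_iff_right two_ne_zero] at hz2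
      simp [hz2] at hq
  · simp only [hzO, dite_false] at hz1 hz2
    refine hzO ⟨fun h0 => ?_, fun h0 => ?_⟩
    · rw [h0, zero_eq_neg] at hz1
      simp [hz1] at hp
    · rw [h0, zero_eq_neg] at hz2
      simp [hz2] at hq

theorem exists_continuousOn_concat {Z X : Type*} [TopologicalSpace Z] [TopologicalSpace X]
    {W : Set Z} {α β : Z → C(I, X)} (hα : ContinuousOn α W) (hβ : ContinuousOn β W)
    (h : ∀ z ∈ W, α z 1 = β z 1) :
    ∃ s : Z → C(I, X), ContinuousOn s W ∧ ∀ z ∈ W, s z 0 = α z 0 ∧ s z 1 = β z 0 := by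
  classical
  let γ₁ : ∀ z : W, Path (α z 0) (α z 1) := fun z => ⟨α z, rfl, rfl⟩
  let γ₂ : ∀ z : W, Path (α z 1) (β z 0) := fun z =>
    ((⟨β z, rfl, (h z z.2).symm⟩ : Path (β z 0) (α z 1))).symm
  rw [continuousOn_iff_continuous_domRestrict] at hα hβ
  have h₁ : Continuous ↿γ₁ :=
    ContinuousMap.continuous_uncurry_of_continuous (⟨_, hα⟩ : C(W, C(I, X)))
  have h₂ : Continuous ↿γ₂ := Path.symm_continuous_family _
    (ContinuousMap.continuous_uncurry_of_continuous (⟨_, hβ⟩ : C(W, C(I, X))))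
  let s : C(W, C(I, X)) := ContinuousMap.curry ⟨_, Path.trans_continuous_family γ₁ h₁ γ₂ h₂⟩
  refine ⟨fun z => if hz : z ∈ W then s ⟨z, hz⟩ else α z, ?_, fun z hz => ?_⟩
  · rw [continuousOn_iff_continuous_domRestrict]
    exact s.continuous.congr fun z => by simp
  · simp only [hz, dite_true]
    exact ⟨((γ₁ ⟨z, hz⟩).trans (γ₂ ⟨z, hz⟩)).source, ((γ₁ ⟨z, hz⟩).trans (γ₂ ⟨z, hz⟩)).target⟩

/-- A space covered by two open sets which contract to a point inside it has topological
complexity at most `2`. -/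
theorem topComplexity_le_two {X : Type*} [TopologicalSpace X] {u v : X → ℝ} (hu : Continuous u)
    (hv : Continuous v) (hu0 : ∀ x, 0 ≤ u x) (hv0 : ∀ x, 0 ≤ v x) (huv : ∀ x, 0 < u x + v x)
    {x₀ : X} {c e : X → C(I, X)} (hc : ContinuousOn c {x | 0 < u x})
    (hc' : ∀ x, 0 < u x → c x 0 = x ∧ c x 1 = x₀) (he : ContinuousOn e {x | 0 < v x})
    (he' : ∀ x, 0 < v x → e x 0 = x ∧ e x 1 = x₀) : topComplexity X ≤ 2 := by
  classical
  have plan : ∀ {W : Set (X × X)} {w w' : X → ℝ} {a a' : X → C(I, X)},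
      ContinuousOn a {x | 0 < w x} → (∀ x, 0 < w x → a x 0 = x ∧ a x 1 = x₀) →
      ContinuousOn a' {x | 0 < w' x} → (∀ x, 0 < w' x → a' x 0 = x ∧ a' x 1 = x₀) →
      (∀ z ∈ W, 0 < w z.1 ∧ 0 < w' z.2) →
      ∃ s : X × X → C(I, X), ContinuousOn s W ∧ ∀ z ∈ W, s z 0 = z.1 ∧ s z 1 = z.2 := by
    intro W w w' a a' ha ha1 ha' ha1' hW
    obtain ⟨s, hs, hs'⟩ := exists_continuousOn_concat (W := W)
      (ha.comp continuousOn_fst fun z hz => (hW z hz).1)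
      (ha'.comp continuousOn_snd fun z hz => (hW z hz).2)
      (fun z hz => by simp [(ha1 _ (hW z hz).1).2, (ha1' _ (hW z hz).2).2])
    refine ⟨s, hs, fun z hz => ?_⟩
    rw [(hs' z hz).1, (hs' z hz).2]
    exact ⟨(ha1 _ (hW z hz).1).1, (ha1' _ (hW z hz).2).1⟩
  let A : Set (X × X) := {z | u z.2 * v z.1 < u z.1 * v z.2}
  let B : Set (X × X) := {z | u z.1 * v z.2 < u z.2 * v z.1}
  have hA : IsOpen A := isOpen_lt (by fun_prop) (by fun_prop)
  have hB : IsOpen B := isOpen_lt (by fun_prop) (by fun_prop)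
  have pos : ∀ x y z t : X, u x * v y < u z * v t → 0 < u z ∧ 0 < v t := fun x y z t h => by
    have hp := (mul_nonneg (hu0 x) (hv0 y)).trans_lt h
    exact ⟨(hu0 z).lt_of_ne fun h => by simp [← h] at hp,
      (hv0 t).lt_of_ne fun h => by simp [← h] at hp⟩
  let U : Fin 3 → Set (X × X) := ![{z | 0 < u z.1 ∧ 0 < u z.2}, A ∪ B, {z | 0 < v z.1 ∧ 0 < v z.2}]
  have hplan : ∀ i, ∃ s : X × X → C(I, X), ContinuousOn s (U i) ∧
      ∀ z ∈ U i, s z 0 = z.1 ∧ s z 1 = z.2 := by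
    intro i
    fin_cases i
    · exact plan hc hc' hc hc' fun z hz => hz
    · obtain ⟨s, hs, hs'⟩ := plan (W := A) hc hc' he he' fun z hz => pos _ _ _ _ hz
      obtain ⟨t, ht, ht'⟩ := plan (W := B) he he' hc hc' fun z hz => (pos _ _ _ _ hz).symm
      have hAB : ∀ z ∈ B, z ∉ A := fun z hz hz' =>
        lt_asymm (a := u z.1 * v z.2) (b := u z.2 * v z.1) hz hz'
      refine ⟨A.piecewise s t, ?_, ?_⟩
      · refine ContinuousOn.union_of_isOpen ?_ ?_ hA hB
        · exact hs.congr fun z hz => piecewise_eq_of_mem _ _ _ hz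
        · exact ht.congr fun z hz => piecewise_eq_of_notMem _ _ _ (hAB z hz)
      · rintro z (hz | hz)
        · rw [piecewise_eq_of_mem _ _ _ hz]
          exact hs' z hz
        · rw [piecewise_eq_of_notMem _ _ _ (hAB z hz)]
          exact ht' z hz
    · exact plan he he' he he' fun z hz => hz
  refine sInf_le ⟨2, rfl, U, fun i => ?_, ?_, fun i => ?_⟩
  · fin_cases i
    · exact (isOpen_lt continuous_const (by fun_prop : Continuous fun z : X × X => u z.1)).inter
        (isOpen_lt continuous_const (by fun_prop : Continuous fun z : X × X => u z.2))
    · exact hA.union hB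
    · exact (isOpen_lt continuous_const (by fun_prop : Continuous fun z : X × X => v z.1)).inter
        (isOpen_lt continuous_const (by fun_prop : Continuous fun z : X × X => v z.2))
  · refine eq_univ_of_forall fun z => mem_iUnion.2 ?_
    rcases lt_trichotomy (u z.1 * v z.2) (u z.2 * v z.1) with h | h | h
    · exact ⟨1, Or.inr h⟩
    · by_cases h0 : 0 < u z.1 ∧ 0 < u z.2
      · exact ⟨0, h0⟩
      · refine ⟨2, ?_⟩
        have h1 := huv z.1
        have h2 := huv z.2
        rcases (hu0 z.1).eq_or_lt with hu1 | hu1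
        · rw [← hu1] at h h1
          have h3 : 0 < v z.1 := by linarith
          have h4 : u z.2 = 0 := by
            have : u z.2 * v z.1 = 0 := by linarith
            exact (mul_eq_zero.1 this).resolve_right h3.ne'
          exact ⟨h3, by linarith⟩
        · have hu2 : u z.2 = 0 := (hu0 z.2).antisymm' (not_lt.1 fun h => h0 ⟨hu1, h⟩)
          rw [hu2] at h h2
          have : u z.1 * v z.2 = 0 := by linarith
          have : v z.2 = 0 := (mul_eq_zero.1 this).resolve_left hu1.ne'
          linarith
    · exact ⟨1, Or.inl h⟩
  · obtain ⟨s, hs, hs'⟩ := hplan i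
    exact ⟨⟨_, continuousOn_iff_continuous_domRestrict.1 hs⟩, fun z => hs' z z.2⟩

theorem exists_contraction_sphere_compl_neg {E : Type*} [NormedAddCommGroup E] [NormedSpace ℝ E]
    (b : sphere (0 : E) 1) :
    ∃ c : sphere (0 : E) 1 → C(I, sphere (0 : E) 1), ContinuousOn c {x | 0 < ‖(x : E) + b‖} ∧
      (∀ x : sphere (0 : E) 1, 0 < ‖(x : E) + b‖ → c x 0 = x ∧ c x 1 = b) ∧
      c b = ContinuousMap.const I b := by
  classical
  set W : Set (sphere (0 : E) 1) := {x | 0 < ‖(x : E) + b‖}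
  have hb := norm_eq_of_mem_sphere b
  let l : W × I → E := fun z => (1 - (z.2 : ℝ)) • (z.1 : E) + (z.2 : ℝ) • (b : E)
  have hl : Continuous l := by fun_prop
  have hl0 : ∀ z, ‖l z‖ ≠ 0 := by
    rintro ⟨⟨x, hx⟩, t⟩ h0
    have hx1 := norm_eq_of_mem_sphere x
    have h0 : (1 - (t : ℝ)) • (x : E) + (t : ℝ) • (b : E) = 0 := norm_eq_zero.1 h0
    have h1 : 1 - (t : ℝ) = t := by
      have := congrArg norm (eq_neg_of_add_eq_zero_left h0)
      rw [norm_neg, norm_smul, norm_smul, hx1, hb, Real.norm_of_nonneg (by linarith [t.2.2]),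
        Real.norm_of_nonneg t.2.1] at this
      linarith
    rw [h1, ← smul_add, smul_eq_zero] at h0
    rcases h0 with h0 | h0
    · linarith
    · have hx : 0 < ‖(x : E) + b‖ := hx
      simp [h0] at hx
  have hlS : ∀ z, ‖l z‖⁻¹ • l z ∈ sphere (0 : E) 1 := fun z => by simp [norm_smul, hl0 z]
  let H : C(W × I, sphere (0 : E) 1) :=
    ⟨fun z => ⟨‖l z‖⁻¹ • l z, hlS z⟩, ((hl.norm.inv₀ hl0).smul hl).subtype_mk hlS⟩
  refine ⟨fun x => if hx : x ∈ W then H.curry ⟨x, hx⟩ else ContinuousMap.const I b, ?_, ?_, ?_⟩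
  · rw [continuousOn_iff_continuous_domRestrict]
    exact H.curry.continuous.congr fun z => by simp
  · intro x hx
    have hx' : x ∈ W := hx
    simp only [hx', dite_true]
    constructor <;> apply Subtype.ext <;> simp [H, l, norm_eq_of_mem_sphere, hb]
  · by_cases hbW : b ∈ W
    · simp only [hbW, dite_true]
      ext t : 2
      have : l (⟨b, hbW⟩, t) = b := by simp only [l]; module
      simp [H, this, hb]
    · simp only [hbW, dite_false]

theorem exists_contraction_sphere_compl {E : Type*} [NormedAddCommGroup E] [NormedSpace ℝ E]
    (hE : 1 < Module.rank ℝ E) (b : sphere (0 : E) 1) :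
    ∃ c : sphere (0 : E) 1 → C(I, sphere (0 : E) 1), ContinuousOn c {x | 0 < ‖(x : E) - b‖} ∧
      ∀ x : sphere (0 : E) 1, 0 < ‖(x : E) - b‖ → c x 0 = x ∧ c x 1 = b := by
  obtain ⟨c, hc, hc', -⟩ := exists_contraction_sphere_compl_neg (-b)
  have hconn := isPathConnected_iff_pathConnectedSpace.1
    (isPathConnected_sphere hE (0 : E) zero_le_one)
  obtain ⟨p⟩ := hconn.joined b (-b)
  have hW : {x : sphere (0 : E) 1 | 0 < ‖(x : E) - b‖} =
      {x : sphere (0 : E) 1 | 0 < ‖(x : E) + (-b : sphere (0 : E) 1)‖} := by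
    ext x
    simp [sub_eq_add_neg]
  obtain ⟨s, hs, hs'⟩ := exists_continuousOn_concat (β := fun _ => (p : C(I, sphere (0 : E) 1)))
    hc continuousOn_const (fun x hx => by simp [(hc' x hx).2])
  rw [hW]
  refine ⟨s, hs, fun x hx => ?_⟩
  have hx' : 0 < ‖(x : E) + (-b : sphere (0 : E) 1)‖ := by simpa [sub_eq_add_neg] using hx
  rw [(hs' x hx').1, (hs' x hx').2]
  exact ⟨(hc' x hx').1, by simp⟩

section Wedge

variable {n : ℕ} {d : Fin n → ℕ} {b : ∀ i, unitSphere (d i)}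

/-- The inclusion of a sphere into the wedge. -/
noncomputable def wedgeInclusion (b : ∀ i, unitSphere (d i)) (i : Fin n) :
    C(unitSphere (d i), WedgeOfSpheres d b) where
  toFun x := Quotient.mk (wedgeSetoid d b) ⟨i, x⟩
  continuous_toFun := continuous_quotient_mk'.comp continuous_sigmaMk

theorem wedgeInclusion_basepoint (i j : Fin n) :
    wedgeInclusion b i (b i) = wedgeInclusion b j (b j) :=
  Quotient.sound (Or.inr ⟨rfl, rfl⟩)

theorem exists_wedgeInclusion_eq (z : WedgeOfSpheres d b) :
    ∃ i x, wedgeInclusion b i x = z := by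
  obtain ⟨⟨i, x⟩, rfl⟩ := Quotient.exists_rep z
  exact ⟨i, x, rfl⟩

/-- The map out of a wedge determined by maps on the spheres which agree at the basepoints. -/
noncomputable def wedgeLift {Y : Type*} (f : ∀ i, unitSphere (d i) → Y)
    (hf : ∀ i j, f i (b i) = f j (b j)) : WedgeOfSpheres d b → Y :=
  Quotient.lift (fun x : Σ i, unitSphere (d i) => f x.1 x.2) <| by
    rintro x y (rfl | ⟨hx, hy⟩)
    · rfl
    · simp only [hx, hy, hf x.1 y.1]

@[simp]
theorem wedgeLift_wedgeInclusion {Y : Type*} (f : ∀ i, unitSphere (d i) → Y)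
    (hf : ∀ i j, f i (b i) = f j (b j)) (i : Fin n) (x : unitSphere (d i)) :
    wedgeLift f hf (wedgeInclusion b i x) = f i x :=
  rfl

theorem continuousOn_wedge {Y : Type*} [TopologicalSpace Y] {g : WedgeOfSpheres d b → Y}
    {s : Set (WedgeOfSpheres d b)} (hs : IsOpen s)
    (hg : ∀ i, ContinuousOn (fun x => g (wedgeInclusion b i x)) (wedgeInclusion b i ⁻¹' s)) :
    ContinuousOn g s := by
  have hq : Topology.IsQuotientMap (Quotient.mk (wedgeSetoid d b)) := isQuotientMap_quotient_mk'
  refine (hq.continuousOn_isOpen_iff hs).2 ?_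
  rintro ⟨i, x⟩ hx
  refine ContinuousAt.continuousWithinAt ?_
  refine Topology.IsOpenEmbedding.sigmaMk.continuousAt_iff.1 ?_
  exact (hg i).continuousAt ((hs.preimage (wedgeInclusion b i).continuous).mem_nhds hx)

theorem continuous_wedge {Y : Type*} [TopologicalSpace Y] {g : WedgeOfSpheres d b → Y}
    (hg : ∀ i, Continuous fun x => g (wedgeInclusion b i x)) : Continuous g :=
  continuousOn_univ.1 (continuousOn_wedge isOpen_univ fun i => (hg i).continuousOn)

theorem exists_wedge_collapse (b : ∀ i, unitSphere (d i)) (i : Fin n) :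
    ∃ c : C(WedgeOfSpheres d b, unitSphere (d i)), (∀ x, c (wedgeInclusion b i x) = x) ∧
      ∀ j, j ≠ i → ∀ x, c (wedgeInclusion b j x) = b i := by
  classical
  let f : ∀ j, unitSphere (d j) → unitSphere (d i) := fun j x => if h : j = i then h ▸ x else b i
  have hf : ∀ j, f j (b j) = b i := fun j => by
    by_cases h : j = i
    · subst h
      simp [f]
    · simp [f, h]
  refine ⟨⟨wedgeLift f fun j k => (hf j).trans (hf k).symm, continuous_wedge fun j => ?_⟩,
    fun x => ?_, fun j hj x => ?_⟩
  · by_cases h : j = i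
    · subst h
      simpa [f] using continuous_id'
    · simpa [f, h] using continuous_const
  · simp [f]
  · simp [f, hj]

theorem false_of_motionPlanners {i j : Fin n} (hij : i ≠ j)
    {U V : Set (WedgeOfSpheres d b × WedgeOfSpheres d b)} (hU : IsOpen U) (hV : IsOpen V)
    (hUV : U ∪ V = univ) (s : C(U, C(I, WedgeOfSpheres d b)))
    (hs : ∀ z : U, s z 0 = z.1.1 ∧ s z 1 = z.1.2) (t : C(V, C(I, WedgeOfSpheres d b)))
    (ht : ∀ z : V, t z 0 = z.1.1 ∧ t z 1 = z.1.2) : False := by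
  obtain ⟨c, hc, hc'⟩ := exists_wedge_collapse b i
  obtain ⟨e, he, he'⟩ := exists_wedge_collapse b j
  let φ : C(unitSphere (d i) × unitSphere (d j), WedgeOfSpheres d b × WedgeOfSpheres d b) :=
    (wedgeInclusion b i).prodMap (wedgeInclusion b j)
  let S : C(φ ⁻¹' U, U) := φ.restrictPreimage U
  let T : C(φ ⁻¹' V, V) := φ.restrictPreimage V
  let H : C(φ ⁻¹' U × I, unitSphere (d i)) := c.comp (s.comp S).uncurry
  let K : C(φ ⁻¹' V × I, unitSphere (d j)) :=
    e.comp ((t.comp T).uncurry.comp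
      ((ContinuousMap.id _).prodMap ⟨σ, unitInterval.continuous_symm⟩))
  have hφ : φ ⁻¹' U ∪ φ ⁻¹' V = univ := by rw [← preimage_union, hUV, preimage_univ]
  refine false_of_homotopies_of_union_eq_univ (hU.preimage φ.continuous) (hV.preimage φ.continuous)
    hφ (p := b i) (q := b j)
    H.continuous (fun z => ?_) (fun z => ?_) K.continuous (fun z => ?_) (fun z => ?_)
  · exact (congrArg c (hs (S z)).1).trans (hc z.1.1)
  · exact (congrArg c (hs (S z)).2).trans (hc' j hij.symm z.1.2)
  · have h : K (z, 0) = e (t (T z) (σ 0)) := rfl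
    rw [unitInterval.symm_zero, (ht (T z)).2] at h
    exact h.trans (he z.1.2)
  · have h : K (z, 1) = e (t (T z) (σ 1)) := rfl
    rw [unitInterval.symm_one, (ht (T z)).1] at h
    exact h.trans (he' i hij z.1.1)

theorem two_le_topComplexity_wedgeOfSpheres {i j : Fin n} (hij : i ≠ j) :
    2 ≤ topComplexity (WedgeOfSpheres d b) := by
  refine le_sInf ?_
  rintro _ ⟨m, rfl, U, hU, hcover, hplan⟩
  by_contra! hm
  have hm : m < 2 := by exact_mod_cast hm
  obtain ⟨s, hs⟩ := hplan 0
  obtain ⟨t, ht⟩ := hplan (Fin.last m)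
  refine false_of_motionPlanners hij (hU 0) (hU (Fin.last m)) ?_ s hs t ht
  refine eq_univ_of_forall fun z => ?_
  obtain ⟨k, hk⟩ := mem_iUnion.1 (hcover.symm ▸ mem_univ z : z ∈ ⋃ i, U i)
  rcases Nat.eq_zero_or_pos k with h | h
  · exact Or.inl ((Fin.ext h : k = 0) ▸ hk)
  · exact Or.inr ((Fin.ext (by simp; omega) : k = Fin.last m) ▸ hk)

theorem exists_wedge_contraction {r : ℝ} {w : ∀ i, unitSphere (d i) → ℝ}
    (hw : ∀ i, Continuous (w i)) (hwb : ∀ i, w i (b i) = r) {x₀ : WedgeOfSpheres d b}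
    (hx₀ : ∀ i, wedgeInclusion b i (b i) = x₀)
    {c : ∀ i, unitSphere (d i) → C(I, unitSphere (d i))}
    (hc : ∀ i, ContinuousOn (c i) {x | 0 < w i x})
    (hc' : ∀ i x, 0 < w i x → c i x 0 = x ∧ c i x 1 = b i)
    (hcb : ∀ i, c i (b i) = ContinuousMap.const I (b i)) :
    ∃ (W : WedgeOfSpheres d b → ℝ) (C : WedgeOfSpheres d b → C(I, WedgeOfSpheres d b)),
      Continuous W ∧ (∀ i x, W (wedgeInclusion b i x) = w i x) ∧ ContinuousOn C {z | 0 < W z} ∧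
      ∀ z, 0 < W z → C z 0 = z ∧ C z 1 = x₀ := by
  have hCb : ∀ i, (wedgeInclusion b i).comp (c i (b i)) = ContinuousMap.const I x₀ := fun i => by
    ext t
    simp [hcb, hx₀]
  let W : WedgeOfSpheres d b → ℝ := wedgeLift w fun i j => (hwb i).trans (hwb j).symm
  have hW : Continuous W := continuous_wedge hw
  refine ⟨W, wedgeLift (fun i x => (wedgeInclusion b i).comp (c i x))
    fun i j => (hCb i).trans (hCb j).symm, hW, fun _ _ => rfl,
    continuousOn_wedge (isOpen_lt continuous_const hW) fun i => ?_, fun z hz => ?_⟩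
  · exact (ContinuousMap.continuous_postcomp (wedgeInclusion b i)).comp_continuousOn (hc i)
  · obtain ⟨i, x, rfl⟩ := exists_wedgeInclusion_eq z
    have h := hc' i x hz
    simp [h.1, h.2, hx₀]

theorem topComplexity_wedgeOfSpheres_le_two (i₀ : Fin n) (hd : ∀ i, 1 ≤ d i) :
    topComplexity (WedgeOfSpheres d b) ≤ 2 := by
  classical
  have hrank : ∀ i, 1 < Module.rank ℝ (EuclideanSpace ℝ (Fin (d i + 1))) := fun i => by
    rw [← Module.finrank_eq_rank, finrank_euclideanSpace_fin]
    exact_mod_cast Nat.lt_succ_of_le (hd i)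
  let b' : ∀ i, sphere (0 : EuclideanSpace ℝ (Fin (d i + 1))) 1 := b
  choose c hc hc' hcb using fun i => exists_contraction_sphere_compl_neg (b' i)
  choose e he he' using fun i => exists_contraction_sphere_compl (hrank i) (b' i)
  have hx₀ : ∀ i, wedgeInclusion b i (b i) = wedgeInclusion b i₀ (b i₀) :=
    fun i => wedgeInclusion_basepoint i i₀
  let u : ∀ i, sphere (0 : EuclideanSpace ℝ (Fin (d i + 1))) 1 → ℝ := fun i x => ‖x.1 + b' i‖
  let v : ∀ i, sphere (0 : EuclideanSpace ℝ (Fin (d i + 1))) 1 → ℝ := fun i x => ‖x.1 - b' i‖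
  have hvb : ∀ i, v i (b' i) = 0 := fun i => by simp [v]
  have hne : ∀ i x, 0 < v i x → x ≠ b' i := fun i x hx h => by simp [h, hvb] at hx
  let e' := fun i => Function.update (e i) (b' i) (ContinuousMap.const I (b' i))
  have hee' : ∀ i x, 0 < v i x → e' i x = e i x := fun i x hx =>
    Function.update_of_ne (hne i x hx) _ _
  have hu : ∀ i, Continuous (u i) := fun i => by fun_prop
  have hv : ∀ i, Continuous (v i) := fun i => by fun_prop
  have hub : ∀ i, u i (b' i) = 2 := fun i => by
    have h : u i (b' i) = ‖(2 : ℝ) • (b' i).1‖ := by rw [two_smul]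
    rw [h, norm_smul, norm_eq_of_mem_sphere]
    norm_num
  obtain ⟨P, C, hP, hPu, hC, hC'⟩ := exists_wedge_contraction (b := b) hu hub hx₀ hc hc' hcb
  obtain ⟨Q, D, hQ, hQv, hD, hD'⟩ := exists_wedge_contraction (b := b) hv hvb hx₀
    (c := e') (fun i => (he i).congr (hee' i)) (fun i x hx => (hee' i x hx).symm ▸ he' i x hx)
    fun i => Function.update_self ..
  refine topComplexity_le_two hP hQ (fun z => ?_) (fun z => ?_) (fun z => ?_) hC hC' hD hD'
  all_goals obtain ⟨i, x, rfl⟩ := exists_wedgeInclusion_eq z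
  · exact (hPu i x).symm ▸ norm_nonneg _
  · exact (hQv i x).symm ▸ norm_nonneg _
  · rw [hPu, hQv]
    have h : u i (b' i) ≤ u i x + v i x := by
      have h := norm_sub_le (x.1 + b' i) (x.1 - b' i)
      have h' : (x.1 + b' i) - (x.1 - b' i) = (b' i).1 + b' i := by abel
      rwa [h'] at h
    rw [hub] at h
    linarith

end Wedge

end Planners

/-- The topological complexity of a wedge of `n ≥ 2` spheres of dimensions `≥ 1` is `2`. -/
theorem topComplexity_wedgeOfSpheres {n : ℕ} (hn : 2 ≤ n) (d : Fin n → ℕ)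
    (hd : ∀ i, 1 ≤ d i) (b : ∀ i, unitSphere (d i)) :
    topComplexity (WedgeOfSpheres d b) = 2 := by
  have hij : (⟨0, by omega⟩ : Fin n) ≠ ⟨1, by omega⟩ := by simp
  exact le_antisymm (topComplexity_wedgeOfSpheres_le_two ⟨0, by omega⟩ hd)
    (two_le_topComplexity_wedgeOfSpheres hij)
end

section
/- Let f : X → Y and g : Y → Z be continuous maps between path-connected topological spaces. Then TC(g ∘ f) ≤ min{TC(f), TC(g)}. -/
open scoped ENNReal

/-- Scott's pullback topological complexity of a continuous map `f : X → Y`: the least `n`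
(or `∞`) such that `X × X` admits a cover by `n + 1` open sets, each carrying a continuous
map `s : Uᵢ → P(Y)` with `(s z) 0 = f z.1` and `(s z) 1 = f z.2`. -/
noncomputable def topComplexityMap {X Y : Type*} [TopologicalSpace X] [TopologicalSpace Y]
    (f : C(X, Y)) : ℕ∞ :=
  sInf {n : ℕ∞ | ∃ m : ℕ, n = (m : ℕ∞) ∧
    ∃ U : Fin (m + 1) → Set (X × X), (∀ i, IsOpen (U i)) ∧ (⋃ i, U i) = Set.univ ∧
      ∀ i, ∃ s : C(U i, C(unitInterval, Y)),
        ∀ z : U i, (s z) 0 = f (z : X × X).1 ∧ (s z) 1 = f (z : X × X).2}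

/-- Postcomposing the local sections with `g` gives `TC (g ∘ f) ≤ TC f`. -/
theorem topComplexityMap_comp_le_left
    {X Y Z : Type*} [TopologicalSpace X] [TopologicalSpace Y] [TopologicalSpace Z]
    (f : C(X, Y)) (g : C(Y, Z)) :
    topComplexityMap (g.comp f) ≤ topComplexityMap f := by
  apply sInf_le_sInf
  rintro n ⟨m, rfl, U, hU, hcov, hs⟩
  refine ⟨m, rfl, U, hU, hcov, fun i => ?_⟩
  obtain ⟨s, hs⟩ := hs i
  refine ⟨⟨fun z => g.comp (s z), (ContinuousMap.continuous_postcomp g).comp s.continuous⟩,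
    fun z => ⟨?_, ?_⟩⟩
  · exact congrArg g (hs z).1
  · exact congrArg g (hs z).2

/-- Pulling back the cover and the local sections along `f × f` gives `TC (g ∘ f) ≤ TC g`. -/
theorem topComplexityMap_comp_le_right
    {X Y Z : Type*} [TopologicalSpace X] [TopologicalSpace Y] [TopologicalSpace Z]
    (f : C(X, Y)) (g : C(Y, Z)) :
    topComplexityMap (g.comp f) ≤ topComplexityMap g := by
  apply sInf_le_sInf
  rintro n ⟨m, rfl, U, hU, hcov, hs⟩
  have hff : Continuous (Prod.map f f) := f.continuous.prodMap f.continuous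
  refine ⟨m, rfl, fun i => Prod.map f f ⁻¹' U i, fun i => (hU i).preimage hff, ?_, fun i => ?_⟩
  · rw [← Set.preimage_iUnion, hcov, Set.preimage_univ]
  obtain ⟨s, hs⟩ := hs i
  exact ⟨s.comp ⟨(U i).restrictPreimage (Prod.map f f), hff.restrictPreimage⟩,
    fun z => hs ((U i).restrictPreimage (Prod.map f f) z)⟩

/-- For continuous maps `f : X → Y` and `g : Y → Z` between path-connected spaces,
`TC (g ∘ f) ≤ min (TC f) (TC g)`. -/
theorem topComplexityMap_comp_le
    {X Y Z : Type*} [TopologicalSpace X] [TopologicalSpace Y] [TopologicalSpace Z]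
    [PathConnectedSpace X] [PathConnectedSpace Y] [PathConnectedSpace Z]
    (f : C(X, Y)) (g : C(Y, Z)) :
    topComplexityMap (g.comp f) ≤ min (topComplexityMap f) (topComplexityMap g) := by
  exact le_min (topComplexityMap_comp_le_left f g) (topComplexityMap_comp_le_right f g)
end
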